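/- arXiv:2510.24925 — 4 statements merged into one kernel-verified Lean document; each statement's English description precedes it below -/
import Mathlib

section
/- Let g : ℕ → ℝ → ℝ be a sequence of functions such that for every j ∈ ℕ, g_j(t) ≥ 0 for all t ≥ 0, and g_j is differentiable on [0,∞) with g_j′(t) = −2·g_{j+1}(t) for all t ≥ 0. Then for every integer k ≥ 1 and every T > 0, g_k(T) ≤ (k/(2T))^k · g_0(0). -/
/-!
Along the chain, `g 0` has derivatives `(g 0)⁽ʲ⁾ = (-2)ʲ g j`, so its Taylor expansion about `T`,
evaluated backwards at `0`, reads `g 0 0 = ∑ j ≤ k, (2T)ʲ / j! * g j T + remainder`: the signs of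
`(-2)ʲ` and `(0 - T)ʲ` cancel, and the Lagrange remainder is nonnegative for the same reason.
Keeping only the term `j = k` gives `g k T ≤ k! / (2T)ᵏ * g 0 0`, and `k! ≤ kᵏ`.
-/

open Set
open scoped Nat

section DerivativeChain

variable {𝕜 F : Type*} [NontriviallyNormedField 𝕜] [NormedAddCommGroup F] [NormedSpace 𝕜 F]
  {a : 𝕜} {g : ℕ → 𝕜 → F} {s : Set 𝕜} {n : ℕ}

theorem iteratedDerivWithin_eqOn_pow_smul_of_chain (hs : UniqueDiffOn 𝕜 s)
    (hg : ∀ j < n, ∀ t ∈ s, HasDerivWithinAt (g j) (a • g (j + 1) t) s t) :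
    EqOn (iteratedDerivWithin n (g 0) s) (fun t ↦ a ^ n • g n t) s := by
  induction n with
  | zero => intro t _; simp
  | succ n ih =>
    intro t ht
    have ih : EqOn (iteratedDerivWithin n (g 0) s) (fun t ↦ a ^ n • g n t) s :=
      ih fun j hj ↦ hg j (hj.trans n.lt_succ_self)
    calc iteratedDerivWithin (n + 1) (g 0) s t
        = derivWithin (fun t ↦ a ^ n • g n t) s t := by
          rw [iteratedDerivWithin_succ, derivWithin_congr ih (ih ht)]
      _ = a ^ n • a • g (n + 1) t :=
          ((hg n n.lt_succ_self t ht).const_smul (a ^ n)).derivWithin (hs t ht)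
      _ = a ^ (n + 1) • g (n + 1) t := by rw [smul_smul, pow_succ]

theorem differentiableOn_iteratedDerivWithin_of_chain (hs : UniqueDiffOn 𝕜 s)
    (hg : ∀ j ≤ n, ∀ t ∈ s, HasDerivWithinAt (g j) (a • g (j + 1) t) s t) :
    DifferentiableOn 𝕜 (iteratedDerivWithin n (g 0) s) s :=
  DifferentiableOn.congr
    (fun t ht ↦ ((hg n le_rfl t ht).const_smul (a ^ n)).differentiableWithinAt)
    (iteratedDerivWithin_eqOn_pow_smul_of_chain hs fun j hj ↦ hg j hj.le)

theorem contDiffOn_of_chain (hs : UniqueDiffOn 𝕜 s)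
    (hg : ∀ j ≤ n, ∀ t ∈ s, HasDerivWithinAt (g j) (a • g (j + 1) t) s t) :
    ContDiffOn 𝕜 n (g 0) s :=
  contDiffOn_of_differentiableOn_deriv fun _ hm ↦
    differentiableOn_iteratedDerivWithin_of_chain hs fun j hj ↦
      hg j (hj.trans (Nat.cast_le.mp hm))

end DerivativeChain

section RealChain

variable {g : ℕ → ℝ → ℝ} {a x₀ x : ℝ} {n : ℕ}

theorem exists_taylor_lagrange_of_chain (hx : x₀ ≠ x)
    (hg : ∀ j ≤ n, ∀ t ∈ uIcc x₀ x, HasDerivWithinAt (g j) (a * g (j + 1) t) (uIcc x₀ x) t) :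
    ∃ ξ ∈ uIoo x₀ x, g 0 x =
      ∑ j ∈ Finset.range (n + 1), (a * (x - x₀)) ^ j / j ! * g j x₀ +
        (a * (x - x₀)) ^ (n + 1) / (n + 1)! * g (n + 1) ξ := by
  have hs : UniqueDiffOn ℝ (uIcc x₀ x) := uniqueDiffOn_uIcc hx
  have iteratedDeriv_eq (j : ℕ) (hj : j ≤ n + 1) (t : ℝ) (ht : t ∈ uIcc x₀ x) :
      iteratedDerivWithin j (g 0) (uIcc x₀ x) t = a ^ j * g j t :=
    iteratedDerivWithin_eqOn_pow_smul_of_chain hs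
      (fun i hi ↦ hg i (Nat.le_of_lt_succ (hi.trans_le hj))) ht
  have taylor_eq : taylorWithinEval (g 0) n (uIcc x₀ x) x₀ x =
      ∑ j ∈ Finset.range (n + 1), (a * (x - x₀)) ^ j / j ! * g j x₀ := by
    rw [taylor_within_apply]
    refine Finset.sum_congr rfl fun j hj ↦ ?_
    rw [iteratedDeriv_eq j (Finset.mem_range.mp hj).le x₀ left_mem_uIcc, smul_eq_mul, mul_pow]
    ring
  obtain ⟨ξ, hξ, remainder_eq⟩ := taylor_mean_remainder_lagrange hx (contDiffOn_of_chain hs hg)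
    ((differentiableOn_iteratedDerivWithin_of_chain hs hg).mono Ioo_subset_Icc_self)
  refine ⟨ξ, hξ, ?_⟩
  rw [taylor_eq, iteratedDeriv_eq (n + 1) le_rfl ξ (Ioo_subset_Icc_self hξ)] at remainder_eq
  rw [mul_pow a (x - x₀) (n + 1)]
  linear_combination remainder_eq

theorem pow_div_factorial_mul_le_of_chain (hx : x₀ ≠ x) (ha : 0 ≤ a * (x - x₀))
    (hg : ∀ j ≤ n, ∀ t ∈ uIcc x₀ x, HasDerivWithinAt (g j) (a * g (j + 1) t) (uIcc x₀ x) t)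
    (h_lower : ∀ j < n, 0 ≤ g j x₀) (h_top : ∀ t ∈ uIoo x₀ x, 0 ≤ g (n + 1) t) :
    (a * (x - x₀)) ^ n / n ! * g n x₀ ≤ g 0 x := by
  obtain ⟨ξ, hξ, taylor_eq⟩ := exists_taylor_lagrange_of_chain hx hg
  have lower_nonneg : 0 ≤ ∑ j ∈ Finset.range n, (a * (x - x₀)) ^ j / j ! * g j x₀ :=
    Finset.sum_nonneg fun j hj ↦
      mul_nonneg (by positivity) (h_lower j (Finset.mem_range.mp hj))
  have remainder_nonneg : 0 ≤ (a * (x - x₀)) ^ (n + 1) / (n + 1)! * g (n + 1) ξ :=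
    mul_nonneg (by positivity) (h_top ξ hξ)
  rw [Finset.sum_range_succ] at taylor_eq
  linarith

end RealChain

theorem factorial_div_pow_le_div_pow {K : Type*} [Field K] [LinearOrder K] [IsStrictOrderedRing K]
    (n : ℕ) {x : K} (hx : 0 ≤ x) : (n ! : K) / x ^ n ≤ (n / x) ^ n := by
  rw [div_pow]
  gcongr
  exact_mod_cast n.factorial_le_pow

theorem iterated_energy_decay_general {g : ℕ → ℝ → ℝ} {c T : ℝ} {k : ℕ} (hc : 0 < c) (hT : 0 < T)
    (hderiv : ∀ j ≤ k, ∀ t ∈ Icc 0 T, HasDerivWithinAt (g j) (-c * g (j + 1) t) (Icc 0 T) t)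
    (h_lower : ∀ j < k, 0 ≤ g j T) (h_top : ∀ t ∈ Ioo 0 T, 0 ≤ g (k + 1) t) :
    g k T ≤ k ! / (c * T) ^ k * g 0 0 := by
  have backward_step : -c * (0 - T) = c * T := by ring
  have taylor_term_le : (c * T) ^ k / k ! * g k T ≤ g 0 0 := by
    rw [← uIcc_of_ge hT.le] at hderiv
    rw [← uIoo_of_ge hT.le] at h_top
    rw [← backward_step]
    exact pow_div_factorial_mul_le_of_chain hT.ne' (by rw [backward_step]; positivity)
      hderiv h_lower h_top
  calc g k T = k ! / (c * T) ^ k * ((c * T) ^ k / k ! * g k T) := by field_simp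
    _ ≤ k ! / (c * T) ^ k * g 0 0 := by gcongr

/-- Iterated energy-decay mechanism: if each `g j` is nonnegative on `[0,∞)` and
`(g j)' = -2 g (j+1)` on `[0,∞)`, then `g k T ≤ (k/(2T))^k · g 0 0` for every
integer `k ≥ 1` and every `T > 0`. -/
theorem iterated_energy_decay
    (g : ℕ → ℝ → ℝ)
    (h_nonneg : ∀ j : ℕ, ∀ t ≥ (0 : ℝ), 0 ≤ g j t)
    (hderiv : ∀ j : ℕ, ∀ t ∈ Set.Ici (0 : ℝ),
      HasDerivWithinAt (g j) (-2 * g (j + 1) t) (Set.Ici 0) t) :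
    ∀ k : ℕ, 1 ≤ k → ∀ T > (0 : ℝ),
      g k T ≤ ((k : ℝ) / (2 * T)) ^ k * g 0 0 := by
  intro k _ T hT
  calc g k T ≤ k ! / (2 * T) ^ k * g 0 0 :=
        iterated_energy_decay_general two_pos hT
          (fun j _ t ht ↦ (hderiv j t ht.1).mono Icc_subset_Ici_self)
          (fun j _ ↦ h_nonneg j T hT.le) (fun t ht ↦ h_nonneg (k + 1) t ht.1.le)
    _ ≤ (k / (2 * T)) ^ k * g 0 0 :=
        mul_le_mul_of_nonneg_right (factorial_div_pow_le_div_pow k (by positivity))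
          (h_nonneg 0 0 le_rfl)
end

section
/- Let L : ℝ^d → ℝ be infinitely differentiable, σ > 0, π(w) = e^{−L(w)/σ}, and let φ₀ : ℝ^d → ℝ be measurable with φ₀ > 0 and ∫ φ₀² dπ < ∞. Then there exists a function φ : (0,∞) × ℝ^d → ℝ, jointly infinitely differentiable and nonnegative, such that: (i) ∂_t φ(t,w) = σ·Δ_w φ(t,w) − ⟨∇L(w), ∇_w φ(t,w)⟩ for all t > 0 and w ∈ ℝ^d; (ii) ∫ φ(t,·)² dπ ≤ ∫ φ₀² dπ for all t > 0; (iii) ∫ ‖∇φ(t,·)‖² dπ ≤ (1/(2σt)) ∫ φ₀² dπ for all t > 0; (iv) for every integer m ≥ 1 and all t > 0, ∫ (𝔏^m φ(t,·))² dπ ≤ (m/t)^{2m} ∫ φ₀² dπ and ∫ ‖∇(𝔏^m φ(t,·))‖² dπ ≤ σ^{−1}·((2m+1)/(2t))^{2m+1} ∫ φ₀² dπ, where 𝔏^m denotes the m-fold iterate of 𝔏g = σΔg − ⟨∇L, ∇g⟩; and (v) the initial datum is attained in the sense that for every smooth compactly supported ψ : ℝ^d → ℝ, ∫ φ(t,·)·ψ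 dπ → ∫ φ₀·ψ dπ as t → 0⁺. -/
open MeasureTheory Filter
open scoped RealInnerProductSpace Topology

/-- The Laplacian of `f : ℝ^d → ℝ`: the sum of second derivatives along the standard
orthonormal basis, `Δf(w) = ∑ i, ∂²f/∂wᵢ²(w)`. -/
noncomputable def laplacian {d : ℕ} (f : EuclideanSpace ℝ (Fin d) → ℝ)
    (w : EuclideanSpace ℝ (Fin d)) : ℝ :=
  ∑ i : Fin d,
    fderiv ℝ (fun v => fderiv ℝ f v (EuclideanSpace.single i (1 : ℝ))) w
      (EuclideanSpace.single i (1 : ℝ))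

/-- The generator of the overdamped Langevin dynamics, `𝔏g = σΔg - ⟨∇L, ∇g⟩`. -/
noncomputable def generator {d : ℕ} (σ : ℝ) (L : EuclideanSpace ℝ (Fin d) → ℝ)
    (g : EuclideanSpace ℝ (Fin d) → ℝ) : EuclideanSpace ℝ (Fin d) → ℝ :=
  fun w => σ * laplacian g w - ⟪gradient L w, gradient g w⟫

/-!
On `L²(π)` the operator `-𝔏` is the nonnegative self-adjoint operator of the closure of the
Dirichlet form `σ ∫ ‖∇u‖² dπ` on test functions. Its resolvent `T = (1 - 𝔏)⁻¹` is obtained from the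
orthogonal projection onto the closed graph of `√σ ∇`, and the functional calculus of `T` defines
`yₘ(t) = 𝔏^m e^{t𝔏} φ₀`; the bounds on `yₘ` and `∇yₘ` are the maxima of powers of `λ` times
`e^{-tλ}` over `λ ≥ 0`.

Positivity is the Beurling–Deny argument: `u ↦ |u|` does not increase the energy, so the resolvents
`(1 - s𝔏)⁻¹` preserve positivity, and so does `e^{t𝔏}` by Euler's formula.

For smoothness, `yₘ' = yₘ₊₁` and `yₘ₊₁ = 𝔏 yₘ` in the sense of distributions. Since all the `yₘ` are
locally bounded in time with values in `L²(π)`, the equation expresses `|ξ|²` times the Fourier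
transform of a localization of `yₘ` through localizations with one derivative less, and iteration
gives rapid decay in `ξ`, locally uniformly in `t`. The localized inverse Fourier transforms then
glue to a jointly smooth representative.
-/

namespace FokkerPlanck

section HeatSymbol

/-- The symbol of `𝔏^m e^{t𝔏}` as a function of the spectral variable `x` of the resolvent
`(1 - 𝔏)⁻¹`: the eigenvalue `x` of the resolvent corresponds to the eigenvalue `1 - x⁻¹` of `𝔏`.
The value at `x = 0` is the limit as the eigenvalue of `𝔏` tends to `-∞`. -/
noncomputable def heatSymbol (m : ℕ) (t x : ℝ) : ℝ :=
  if x = 0 then 0 else (1 - x⁻¹) ^ m * Real.exp (t * (1 - x⁻¹))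

/-- The symbol of the resolvent `(1 - s𝔏)⁻¹` as a function of the spectral variable `x` of
`(1 - 𝔏)⁻¹`. -/
noncomputable def resolventSymbol (s x : ℝ) : ℝ := x * (x + s * (1 - x))⁻¹

@[simp] lemma heatSymbol_zero_right (m : ℕ) (t : ℝ) : heatSymbol m t 0 = 0 := if_pos rfl

lemma heatSymbol_of_ne_zero {x : ℝ} (hx : x ≠ 0) (m : ℕ) (t : ℝ) :
    heatSymbol m t x = (1 - x⁻¹) ^ m * Real.exp (t * (1 - x⁻¹)) := if_neg hx

lemma abs_pow_mul_exp_mul_le (m : ℕ) {t l : ℝ} (ht : 0 < t) (hl : l ≤ 0) :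
    |l ^ m * Real.exp (t * l)| ≤ (m / t) ^ m := by
  rcases m.eq_zero_or_pos with rfl | hm
  · simpa using mul_nonpos_of_nonneg_of_nonpos ht.le hl
  have : (0 : ℝ) < m := Nat.cast_pos.2 hm
  have one_factor : |l| * Real.exp (t * l / m) ≤ m / t := by
    rw [abs_of_nonpos hl, ← neg_neg (t * l / m), Real.exp_neg, ← div_eq_mul_inv,
      div_le_iff₀ (Real.exp_pos _)]
    calc -l = m / t * -(t * l / m) := by field_simp
      _ ≤ m / t * Real.exp (-(t * l / m)) := by
        gcongr
        linarith [Real.add_one_le_exp (-(t * l / m))]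
  calc |l ^ m * Real.exp (t * l)| = (|l| * Real.exp (t * l / m)) ^ m := by
        rw [abs_mul, abs_pow, Real.abs_exp, mul_pow, ← Real.exp_nat_mul]
        congr 2
        field_simp
    _ ≤ (m / t) ^ m := by gcongr

lemma one_sub_inv_nonpos {x : ℝ} (hx : x ∈ Set.Icc (0 : ℝ) 1) (h0 : x ≠ 0) : 1 - x⁻¹ ≤ 0 :=
  sub_nonpos.2 ((one_le_inv₀ (hx.1.lt_of_ne' h0)).2 hx.2)

lemma abs_heatSymbol_le (m : ℕ) {t x : ℝ} (ht : 0 < t) (hx : x ∈ Set.Icc (0 : ℝ) 1) :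
    |heatSymbol m t x| ≤ (m / t) ^ m := by
  by_cases h0 : x = 0
  · rw [h0, heatSymbol_zero_right, abs_zero]
    positivity
  · rw [heatSymbol_of_ne_zero h0]
    exact abs_pow_mul_exp_mul_le m ht (one_sub_inv_nonpos hx h0)

lemma heatSymbol_mul_heatSymbol (m n : ℕ) (s t x : ℝ) :
    heatSymbol m s x * heatSymbol n t x = heatSymbol (m + n) (s + t) x := by
  by_cases h0 : x = 0
  · simp [h0]
  · simp only [heatSymbol_of_ne_zero h0, add_mul, Real.exp_add, pow_add]
    ring

lemma mul_heatSymbol_sub_heatSymbol_succ (m : ℕ) (t x : ℝ) :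
    x * (heatSymbol m t x - heatSymbol (m + 1) t x) = heatSymbol m t x := by
  by_cases h0 : x = 0
  · simp [h0]
  · simp only [heatSymbol_of_ne_zero h0]
    linear_combination (1 - x⁻¹) ^ m * Real.exp (t * (1 - x⁻¹)) * mul_inv_cancel₀ h0

lemma abs_heatSymbol_mul_self_sub_le {t x : ℝ} (ht : 0 < t) (hx : x ∈ Set.Icc (0 : ℝ) 1) :
    |heatSymbol 0 t x * x - x| ≤ t := by
  by_cases h0 : x = 0
  · simp [h0, ht.le]
  have hl : t * (1 - x⁻¹) ≤ 0 := mul_nonpos_of_nonneg_of_nonpos ht.le (one_sub_inv_nonpos hx h0)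
  have h_exp : |Real.exp (t * (1 - x⁻¹)) - 1| ≤ -(t * (1 - x⁻¹)) := by
    rw [abs_of_nonpos (sub_nonpos.2 (Real.exp_le_one_iff.2 hl))]
    linarith [Real.add_one_le_exp (t * (1 - x⁻¹))]
  calc |heatSymbol 0 t x * x - x| = |Real.exp (t * (1 - x⁻¹)) - 1| * x := by
        rw [heatSymbol_of_ne_zero h0, ← sub_one_mul, abs_mul, abs_of_nonneg hx.1, pow_zero,
          one_mul]
    _ ≤ -(t * (1 - x⁻¹)) * x := by gcongr; exact hx.1
    _ = t * (1 - x) := by field_simp; ring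
    _ ≤ t := mul_le_of_le_one_right ht.le (by linarith [hx.1])

lemma hasDerivAt_heatSymbol (m : ℕ) (t x : ℝ) :
    HasDerivAt (fun s => heatSymbol m s x) (heatSymbol (m + 1) t x) t := by
  by_cases h0 : x = 0
  · simpa [h0] using hasDerivAt_const t (0 : ℝ)
  · simp only [heatSymbol_of_ne_zero h0]
    have h := ((hasDerivAt_mul_const (1 - x⁻¹)).exp (x := t)).const_mul ((1 - x⁻¹) ^ m)
    rwa [← mul_assoc, mul_right_comm, ← pow_succ] at h

lemma continuousOn_heatSymbol (m : ℕ) {t : ℝ} (ht : 0 < t) :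
    ContinuousOn (heatSymbol m t) (Set.Icc (0 : ℝ) 1) := by
  intro x hx
  by_cases h0 : x = 0
  · subst h0
    set C : ℝ := (m / t) ^ m + ((m + 1 : ℕ) / t) ^ (m + 1)
    have h_le : ∀ y ∈ Set.Icc (0 : ℝ) 1, |heatSymbol m t y| ≤ y * C := fun y hy => by
      rw [← mul_heatSymbol_sub_heatSymbol_succ, abs_mul, abs_of_nonneg hy.1]
      exact mul_le_mul_of_nonneg_left ((abs_sub _ _).trans
        (add_le_add (abs_heatSymbol_le m ht hy) (abs_heatSymbol_le (m + 1) ht hy))) hy.1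
    have h_lim : Tendsto (fun y : ℝ => y * C) (𝓝[Set.Icc 0 1] 0) (𝓝 0) :=
      (Continuous.tendsto' (by fun_prop) 0 0 (zero_mul C)).mono_left nhdsWithin_le_nhds
    rw [ContinuousWithinAt, heatSymbol_zero_right]
    exact squeeze_zero_norm' (eventually_mem_nhdsWithin.mono h_le) h_lim
  · have : ContinuousAt (fun x : ℝ => (1 - x⁻¹) ^ m * Real.exp (t * (1 - x⁻¹))) x := by
      have := continuousAt_inv₀ h0
      fun_prop
    exact (this.congr ((isOpen_ne.eventually_mem h0).mono fun y hy =>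
      (heatSymbol_of_ne_zero hy m t).symm)).continuousWithinAt

lemma tendstoUniformlyOn_slope {α : Type*} {S : Set α} {F F' F'' : ℝ → α → ℝ} {t δ C : ℝ}
    (hδ : 0 < δ)
    (hF : ∀ x ∈ S, ∀ s ∈ Metric.ball t δ, HasDerivAt (fun s => F s x) (F' s x) s)
    (hF' : ∀ x ∈ S, ∀ s ∈ Metric.ball t δ, HasDerivAt (fun s => F' s x) (F'' s x) s)
    (hC : ∀ x ∈ S, ∀ s ∈ Metric.ball t δ, |F'' s x| ≤ C) :
    TendstoUniformlyOn (fun s x => slope (fun r => F r x) t s) (F' t) (𝓝[≠] t) S := by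
  have h_slope : ∀ s ∈ Metric.ball t δ, s ≠ t → ∀ x ∈ S,
      |slope (fun r => F r x) t s - F' t x| ≤ C * |s - t| := by
    intro s hs hst x hx
    have h_sub : Metric.closedBall t |s - t| ⊆ Metric.ball t δ :=
      Metric.closedBall_subset_ball (by simpa [Real.dist_eq] using hs)
    have h_deriv : ∀ r ∈ Metric.closedBall t |s - t|, ‖F' r x - F' t x‖ ≤ C * |s - t| := by
      intro r hr
      have hC0 : 0 ≤ C := (abs_nonneg _).trans (hC x hx s hs)
      refine ((convex_ball t δ).norm_image_sub_le_of_norm_hasDerivWithin_le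
        (fun r hr => (hF' x hx r hr).hasDerivWithinAt) (hC x hx)
        (Metric.mem_ball_self hδ) (h_sub hr)).trans ?_
      gcongr
      simpa [Real.dist_eq] using hr
    have h := (convex_closedBall t |s - t|).norm_image_sub_le_of_norm_hasDerivWithin_le
      (f := fun r => F r x - r * F' t x)
      (fun r hr => ((hF x hx r (h_sub hr)).sub
        (hasDerivAt_mul_const (F' t x))).hasDerivWithinAt)
      h_deriv (Metric.mem_closedBall_self (abs_nonneg _))
      (Metric.mem_closedBall.2 (Real.dist_eq s t).le)
    have hne : s - t ≠ 0 := sub_ne_zero.2 hst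
    rw [slope_def_field, ← mul_le_mul_iff_left₀ (abs_pos.2 hne), ← abs_mul, sub_mul,
      div_mul_cancel₀ _ hne]
    refine le_of_eq_of_le ?_ h
    rw [Real.norm_eq_abs]
    ring_nf
  rw [Metric.tendstoUniformlyOn_iff]
  intro ε hε
  have h_small : Tendsto (fun s => C * |s - t|) (𝓝[≠] t) (𝓝 0) :=
    (Continuous.tendsto' (by fun_prop) t 0 (by simp)).mono_left nhdsWithin_le_nhds
  filter_upwards [h_small.eventually_lt_const hε, self_mem_nhdsWithin,
    mem_nhdsWithin_of_mem_nhds (Metric.ball_mem_nhds t hδ)] with s hs hst hst' x hx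
  rw [dist_comm]
  exact (h_slope s hst' hst x hx).trans_lt hs

lemma tendstoUniformlyOn_slope_heatSymbol (m : ℕ) {t : ℝ} (ht : 0 < t) :
    TendstoUniformlyOn (fun s x => slope (fun r => heatSymbol m r x) t s)
      (heatSymbol (m + 1) t) (𝓝[≠] t) (Set.Icc 0 1) := by
  refine tendstoUniformlyOn_slope (F' := heatSymbol (m + 1)) (F'' := heatSymbol (m + 2))
    (C := ((m + 2 : ℕ) / (t / 2)) ^ (m + 2)) (half_pos ht)
    (fun x _ s _ => hasDerivAt_heatSymbol m s x)
    (fun x _ s _ => hasDerivAt_heatSymbol (m + 1) s x) fun x hx s hs => ?_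
  have hs' : t / 2 < s := by linarith [(abs_lt.1 (Metric.mem_ball.1 hs)).1]
  refine (abs_heatSymbol_le (m + 2) ((half_pos ht).trans hs') hx).trans ?_
  have := (half_pos ht).trans hs'
  gcongr

end HeatSymbol

section Euler

lemma add_mul_one_sub_pos {s x : ℝ} (hs : 0 < s) (hx : x ∈ Set.Icc (0 : ℝ) 1) :
    0 < x + s * (1 - x) := by
  rcases hx.1.eq_or_lt with rfl | h
  · simpa using hs
  · exact add_pos_of_pos_of_nonneg h (mul_nonneg hs.le (sub_nonneg.2 hx.2))

lemma continuousOn_inv_add_mul_one_sub {s : ℝ} (hs : 0 < s) :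
    ContinuousOn (fun x : ℝ => (x + s * (1 - x))⁻¹) (Set.Icc 0 1) :=
  ContinuousOn.inv₀ (by fun_prop) fun _ hx => (add_mul_one_sub_pos hs hx).ne'

lemma continuousOn_resolventSymbol {s : ℝ} (hs : 0 < s) :
    ContinuousOn (resolventSymbol s) (Set.Icc 0 1) :=
  continuousOn_id.mul (continuousOn_inv_add_mul_one_sub hs)

lemma resolventSymbol_of_ne_zero {x : ℝ} (hx : x ≠ 0) (s : ℝ) :
    resolventSymbol s x = (1 - s * (1 - x⁻¹))⁻¹ := by
  have : x + s * (1 - x) = x * (1 - s * (1 - x⁻¹)) := by field_simp; ring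
  rw [resolventSymbol, this, mul_inv, mul_inv_cancel_left₀ hx]

/-- Doubling the number of steps of the implicit Euler scheme decreases it, since
`1 + u ≤ (1 + u/2)²`. -/
lemma antitone_resolventSymbol_pow {t x : ℝ} (ht : 0 < t) (hx : x ∈ Set.Icc (0 : ℝ) 1) :
    Antitone fun k : ℕ => resolventSymbol (t / 2 ^ k) x ^ 2 ^ k := by
  refine antitone_nat_of_succ_le fun k => ?_
  by_cases h0 : x = 0
  · simp [h0, resolventSymbol]
  have hl : 0 ≤ -(t / 2 ^ k * (1 - x⁻¹)) := neg_nonneg.2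
    (mul_nonpos_of_nonneg_of_nonpos (by positivity) (one_sub_inv_nonpos hx h0))
  have h_half : t / 2 ^ (k + 1) * (1 - x⁻¹) = t / 2 ^ k * (1 - x⁻¹) / 2 := by
    field_simp; ring
  rw [resolventSymbol_of_ne_zero h0, resolventSymbol_of_ne_zero h0, h_half, pow_succ' 2 k,
    pow_mul, inv_pow]
  gcongr
  · linarith
  · nlinarith

lemma tendsto_resolventSymbol_pow {t : ℝ} (x : ℝ) :
    Tendsto (fun k : ℕ => resolventSymbol (t / 2 ^ k) x ^ 2 ^ k) atTop
      (𝓝 (heatSymbol 0 t x)) := by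
  by_cases h0 : x = 0
  · simp [h0, resolventSymbol]
  have h := (Real.tendsto_one_add_div_pow_exp (-(t * (1 - x⁻¹)))).inv₀ (Real.exp_pos _).ne'
  rw [← Real.exp_neg, neg_neg] at h
  rw [heatSymbol_of_ne_zero h0, pow_zero, one_mul]
  refine (h.comp (tendsto_pow_atTop_atTop_of_one_lt (one_lt_two (α := ℕ)))).congr fun k => ?_
  rw [resolventSymbol_of_ne_zero h0, inv_pow, Function.comp_apply]
  push_cast
  ring_nf

/-- **Euler's formula** `(1 - (t/n)𝔏)⁻ⁿ → e^{t𝔏}` along `n = 2^k`, for the symbols. -/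
lemma tendstoUniformlyOn_resolventSymbol_pow {t : ℝ} (ht : 0 < t) :
    TendstoUniformlyOn (fun (k : ℕ) x => resolventSymbol (t / 2 ^ k) x ^ 2 ^ k)
      (heatSymbol 0 t) atTop (Set.Icc 0 1) :=
  Antitone.tendstoUniformlyOn_of_forall_tendsto isCompact_Icc
    (fun k => (continuousOn_resolventSymbol (by positivity)).pow _)
    (fun _ hx => antitone_resolventSymbol_pow ht hx) (continuousOn_heatSymbol 0 ht)
    fun x _ => tendsto_resolventSymbol_pow x

end Euler

section FunctionalCalculus

variable {H : Type*} [NormedAddCommGroup H] [InnerProductSpace ℂ H] [CompleteSpace H]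
  {T : H →L[ℂ] H}

lemma spectrum_subset_Icc_of_isPositive (hpos : T.IsPositive) (hT : ‖T‖ ≤ 1) :
    spectrum ℝ T ⊆ Set.Icc 0 1 := by
  nontriviality H
  intro x hx
  refine ⟨SpectrumRestricts.nnreal_iff.1 hpos.spectrumRestricts x hx, ?_⟩
  exact (le_abs_self x).trans ((spectrum.norm_le_norm_of_mem hx).trans hT)

/-- The operator `𝔏^m e^{t𝔏}`, where `T = (1 - 𝔏)⁻¹`. -/
noncomputable def heatFlow (T : H →L[ℂ] H) (m : ℕ) (t : ℝ) : H →L[ℂ] H := cfc (heatSymbol m t) T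

lemma inner_cfc_left (g : ℝ → ℝ) (u v : H) : inner ℂ (cfc g T u) v = inner ℂ u (cfc g T v) :=
  (IsSelfAdjoint.cfc : IsSelfAdjoint (cfc g T)).isSymmetric u v

lemma hasDerivAt_cfc {F : ℝ → ℝ → ℝ} {F' : ℝ → ℝ} {t : ℝ}
    (hF : ∀ᶠ s in 𝓝 t, ContinuousOn (F s) (spectrum ℝ T))
    (hF' : TendstoUniformlyOn (fun s x => slope (fun r => F r x) t s) F' (𝓝[≠] t)
      (spectrum ℝ T)) :
    HasDerivAt (fun s => cfc (F s) T) (cfc F' T) t := by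
  rw [hasDerivAt_iff_tendsto_slope]
  have hFt := hF.self_of_nhds
  have hF_ne := hF.filter_mono (nhdsWithin_le_nhds (s := {t}ᶜ))
  have h_sub : ∀ᶠ s in 𝓝[≠] t, ContinuousOn (fun x => F s x - F t x) (spectrum ℝ T) :=
    hF_ne.mono fun s hs => hs.sub hFt
  simp only [slope_def_module] at hF'
  refine (tendsto_cfc_fun hF' (h_sub.mono fun s hs => hs.const_smul (s - t)⁻¹)).congr'
    (hF_ne.mono fun s hs => ?_)
  rw [slope_def_module, cfc_smul (s - t)⁻¹ (fun x => F s x - F t x) T (hs.sub hFt),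
    cfc_sub (F s) (F t) T hs hFt]

variable (hT : IsSelfAdjoint T) (hsp : spectrum ℝ T ⊆ Set.Icc 0 1)
include hsp

lemma norm_heatFlow_le (m : ℕ) {t : ℝ} (ht : 0 < t) : ‖heatFlow T m t‖ ≤ (m / t) ^ m :=
  norm_cfc_le (by positivity) fun _ hx => abs_heatSymbol_le m ht (hsp hx)

lemma norm_inner_heatFlow_heatFlow_succ_le (m : ℕ) {t : ℝ} (ht : 0 < t) (f : H) :
    ‖inner ℂ (heatFlow T m t f) (heatFlow T (m + 1) t f)‖ ≤
      ((2 * m + 1) / (2 * t)) ^ (2 * m + 1) * ‖f‖ ^ 2 := by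
  have h_mul : heatFlow T m t * heatFlow T (m + 1) t = heatFlow T (2 * m + 1) (2 * t) := by
    simp only [heatFlow]
    rw [← cfc_mul _ _ T ((continuousOn_heatSymbol m ht).mono hsp)
      ((continuousOn_heatSymbol (m + 1) ht).mono hsp)]
    simp only [heatSymbol_mul_heatSymbol]
    rw [← two_mul, ← add_assoc, ← two_mul]
  calc ‖inner ℂ (heatFlow T m t f) (heatFlow T (m + 1) t f)‖
      = ‖inner ℂ f (heatFlow T (2 * m + 1) (2 * t) f)‖ := by
        rw [← h_mul, heatFlow, inner_cfc_left]; rfl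
    _ ≤ ‖f‖ * (‖heatFlow T (2 * m + 1) (2 * t)‖ * ‖f‖) :=
        (norm_inner_le_norm _ _).trans (by gcongr; exact ContinuousLinearMap.le_opNorm _ _)
    _ ≤ ‖f‖ * (((2 * m + 1 : ℕ) / (2 * t)) ^ (2 * m + 1) * ‖f‖) := by
        gcongr; exact norm_heatFlow_le hsp _ (by positivity)
    _ = _ := by push_cast; ring

lemma hasDerivAt_heatFlow (m : ℕ) {t : ℝ} (ht : 0 < t) :
    HasDerivAt (fun s => heatFlow T m s) (heatFlow T (m + 1) t) t :=
  hasDerivAt_cfc ((eventually_gt_nhds ht).mono fun _ hs => (continuousOn_heatSymbol m hs).mono hsp)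
    ((tendstoUniformlyOn_slope_heatSymbol m ht).mono hsp)

include hT

lemma mul_heatFlow_sub_heatFlow_succ (m : ℕ) {t : ℝ} (ht : 0 < t) :
    T * (heatFlow T m t - heatFlow T (m + 1) t) = heatFlow T m t := by
  have hm := (continuousOn_heatSymbol m ht).mono hsp
  have hm' := (continuousOn_heatSymbol (m + 1) ht).mono hsp
  simp only [heatFlow]
  rw [← cfc_sub _ _ T hm hm']
  nth_rw 1 [← cfc_id' ℝ T hT]
  rw [← cfc_mul (fun x => x) (fun x => heatSymbol m t x - heatSymbol (m + 1) t x) T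
    continuousOn_id (hm.sub hm')]
  exact cfc_congr fun x _ => mul_heatSymbol_sub_heatSymbol_succ m t x

lemma inner_heatFlow_succ (m : ℕ) {t : ℝ} (ht : 0 < t) (z f : H) :
    inner ℂ (T z) (heatFlow T (m + 1) t f) = inner ℂ (T z - z) (heatFlow T m t f) := by
  have h := congrArg (inner ℂ z) (DFunLike.congr_fun (mul_heatFlow_sub_heatFlow_succ hT hsp m ht) f)
  have h_symm : ∀ v, inner ℂ z (T v) = inner ℂ (T z) v := fun v => (hT.isSymmetric z v).symm
  simp only [mul_apply_eq_comp, sub_apply, map_sub, inner_sub_right, h_symm] at h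
  rw [inner_sub_left, ← h]
  ring

lemma tendsto_inner_heatFlow_zero (z f : H) :
    Tendsto (fun t => inner ℂ (T z) (heatFlow T 0 t f)) (𝓝[>] (0 : ℝ)) (𝓝 (inner ℂ (T z) f)) := by
  have h_norm : ∀ t ∈ Set.Ioi (0 : ℝ), ‖heatFlow T 0 t * T - T‖ ≤ t := by
    intro t ht
    have hc := (continuousOn_heatSymbol 0 ht).mono hsp
    have : heatFlow T 0 t * T - T = cfc (fun x => heatSymbol 0 t x * x - x) T := by
      rw [cfc_sub (fun x => heatSymbol 0 t x * x) (fun x => x) T (hc.mul continuousOn_id)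
        continuousOn_id, cfc_mul _ (fun x => x) T hc continuousOn_id, cfc_id' ℝ T hT, heatFlow]
    rw [this]
    exact norm_cfc_le ht.le fun x hx => abs_heatSymbol_mul_self_sub_le ht (hsp hx)
  have h_lim : Tendsto (fun t => heatFlow T 0 t * T - T) (𝓝[>] 0) (𝓝 0) :=
    squeeze_zero_norm' (eventually_mem_nhdsWithin.mono h_norm)
      (tendsto_id.mono_left nhdsWithin_le_nhds)
  have h_apply : Tendsto (fun t => inner ℂ ((heatFlow T 0 t * T - T) z) f + inner ℂ (T z) f)
      (𝓝[>] 0) (𝓝 (inner ℂ ((0 : H →L[ℂ] H) z) f + inner ℂ (T z) f)) :=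
    ((((ContinuousLinearMap.apply ℂ H z).continuous.tendsto _).comp h_lim).inner
      tendsto_const_nhds).add_const _
  simp only [sub_apply, mul_apply_eq_comp, inner_sub_left, sub_add_cancel,
    zero_apply, inner_zero_left, zero_add] at h_apply
  exact h_apply.congr fun t => inner_cfc_left _ _ _

lemma heatFlow_zero_mem_of_isClosed {C : Set H} (hC : IsClosed C)
    (hr : ∀ s > 0, ∀ f ∈ C, cfc (resolventSymbol s) T f ∈ C) {t : ℝ} (ht : 0 < t) {f : H}
    (hf : f ∈ C) : heatFlow T 0 t f ∈ C := by
  have h_pow : ∀ s > 0, ∀ n : ℕ, (cfc (resolventSymbol s) T ^ n) f ∈ C := fun s hs n => by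
    induction n with
    | zero => simpa using hf
    | succ n ih => rw [pow_succ']; exact hr s hs _ ih
  have hc : ∀ k : ℕ, ContinuousOn (resolventSymbol (t / 2 ^ k)) (spectrum ℝ T) :=
    fun k => (continuousOn_resolventSymbol (by positivity)).mono hsp
  have h_lim : Tendsto (fun k : ℕ => cfc (fun x => resolventSymbol (t / 2 ^ k) x ^ 2 ^ k) T) atTop
      (𝓝 (heatFlow T 0 t)) :=
    tendsto_cfc_fun ((tendstoUniformlyOn_resolventSymbol_pow ht).mono hsp)
      (.of_forall fun k => (hc k).pow _)
  refine hC.mem_of_tendsto (((ContinuousLinearMap.apply ℂ H f).continuous.tendsto _).comp h_lim)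
    (.of_forall fun k => ?_)
  rw [Function.comp_apply, cfc_pow _ _ T (hc k)]
  exact h_pow _ (by positivity) _

lemma exists_cfc_resolventSymbol_eq {s : ℝ} (hs : 0 < s) (f : H) :
    ∃ z, cfc (resolventSymbol s) T f = T z ∧
      f - cfc (resolventSymbol s) T f = s • (z - cfc (resolventSymbol s) T f) := by
  set k : ℝ → ℝ := fun x => (x + s * (1 - x))⁻¹
  have hk : ContinuousOn k (spectrum ℝ T) := (continuousOn_inv_add_mul_one_sub hs).mono hsp
  have hr : ContinuousOn (resolventSymbol s) (spectrum ℝ T) :=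
    (continuousOn_resolventSymbol hs).mono hsp
  have h_range : cfc (resolventSymbol s) T = T * cfc k T := by
    nth_rw 2 [← cfc_id' ℝ T hT]
    rw [← cfc_mul (fun x => x) k T continuousOn_id hk]
    rfl
  have h_sub : 1 - cfc (resolventSymbol s) T = s • (cfc k T - cfc (resolventSymbol s) T) := by
    rw [← cfc_one ℝ T hT, ← cfc_sub 1 _ T continuousOn_const hr, ← cfc_sub _ _ T hk hr,
      ← cfc_smul s (fun x => k x - resolventSymbol s x) T (hk.sub hr)]
    refine cfc_congr fun x hx => ?_
    have := (add_mul_one_sub_pos hs (hsp hx)).ne'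
    simp only [resolventSymbol, k, Pi.one_apply, smul_eq_mul]
    field_simp
    ring
  exact ⟨cfc k T f, DFunLike.congr_fun h_range f, DFunLike.congr_fun h_sub f⟩

end FunctionalCalculus

section Form

variable {H G : Type*} [NormedAddCommGroup H] [InnerProductSpace ℂ H] [NormedAddCommGroup G]
  [InnerProductSpace ℂ G] {K : Submodule ℂ (WithLp 2 (H × G))} {Φ : H → H}

lemma exists_mem_of_subset_closure (hΦ : LipschitzWith 1 Φ) {S : Set (WithLp 2 (H × G))}
    (hKS : (K : Set (WithLp 2 (H × G))) ⊆ closure S)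
    (h_energy : ∀ k ∈ S, ∀ δ > 0, ∃ k' ∈ K, ‖k'.fst - Φ k.fst‖ ≤ δ ∧ ‖k'.snd‖ ≤ ‖k.snd‖)
    {k : WithLp 2 (H × G)} (hk : k ∈ K) {δ : ℝ} (hδ : 0 < δ) :
    ∃ k' ∈ K, ‖k'.fst - Φ k.fst‖ ≤ δ ∧ ‖k'.snd‖ ≤ ‖k.snd‖ + δ := by
  obtain ⟨l, hlS, hl⟩ := Metric.mem_closure_iff.1 (hKS hk) (δ / 2) (half_pos hδ)
  obtain ⟨k', hk', h_fst, h_snd⟩ := h_energy l hlS (δ / 2) (half_pos hδ)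
  refine ⟨k', hk', ?_, h_snd.trans ?_⟩
  · calc ‖k'.fst - Φ k.fst‖ ≤ ‖k'.fst - Φ l.fst‖ + ‖Φ l.fst - Φ k.fst‖ :=
          norm_sub_le_norm_sub_add_norm_sub _ _ _
      _ ≤ δ / 2 + δ / 2 := by
          gcongr
          rw [← dist_eq_norm, dist_comm]
          refine (hΦ.dist_le_mul _ _).trans ?_
          rw [NNReal.coe_one, one_mul]
          exact (WithLp.dist_fst_le _ _).trans hl.le
      _ = δ := add_halves δ
  · have := (WithLp.dist_snd_le k l).trans hl.le
    rw [dist_eq_norm, norm_sub_rev] at this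
    linarith [norm_le_norm_add_norm_sub' l.snd k.snd]

variable [CompleteSpace H] [CompleteSpace G] (K) [K.HasOrthogonalProjection]

/-- For a closed subspace `K` of `H × G`, thought of as the graph of a gradient `u ↦ ∇u`, this sends
`z` to the pair `(u, ∇u) ∈ K` with `⟪u, v⟫ + ⟪∇u, ∇v⟫ = ⟪z, v⟫` for all `(v, ∇v) ∈ K`, as in the
Lax–Milgram theorem. -/
noncomputable def formLift : H →L[ℂ] WithLp 2 (H × G) :=
  K.starProjection ∘L (WithLp.fstL 2 ℂ H G).adjoint

/-- The resolvent `(1 - 𝔏)⁻¹`, where `-𝔏` is the nonnegative self-adjoint operator of the quadratic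
form `u ↦ ‖∇u‖²` whose graph is `K`. -/
noncomputable def formResolvent : H →L[ℂ] H := WithLp.fstL 2 ℂ H G ∘L formLift K

lemma fst_formLift (z : H) : (formLift K z).fst = formResolvent K z := rfl

lemma formLift_mem (z : H) : formLift K z ∈ K := K.starProjection_apply_mem _

variable {K}

lemma inner_formLift (z : H) {k : WithLp 2 (H × G)} (hk : k ∈ K) :
    inner ℂ (formLift K z) k = inner ℂ z k.fst := by
  rw [formLift, ContinuousLinearMap.comp_apply, K.inner_starProjection_left_eq_right,
    K.starProjection_eq_self_iff.2 hk, ContinuousLinearMap.adjoint_inner_left]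
  rfl

lemma inner_snd_formLift (z : H) {k : WithLp 2 (H × G)} (hk : k ∈ K) :
    inner ℂ (formLift K z).snd k.snd = inner ℂ (z - formResolvent K z) k.fst := by
  rw [inner_sub_left, ← inner_formLift z hk, WithLp.prod_inner_apply, ← fst_formLift]
  exact (add_sub_cancel_left _ _).symm

lemma eq_formLift {z : H} {u : WithLp 2 (H × G)} (hu : u ∈ K)
    (h : ∀ k ∈ K, inner ℂ u k = inner ℂ z k.fst) : u = formLift K z := by
  refine sub_eq_zero.1 (inner_self_eq_zero (𝕜 := ℂ) |>.1 ?_)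
  have hk := K.sub_mem hu (formLift_mem K z)
  rw [inner_sub_left, h _ hk, inner_formLift z hk, sub_self]

variable (K)

lemma isPositive_formResolvent : (formResolvent K).IsPositive := by
  have h_inner : ∀ z w, inner ℂ z (formResolvent K w) = inner ℂ (formLift K z) (formLift K w) :=
    fun z w => (inner_formLift z (formLift_mem K w)).symm
  refine ⟨fun z w => ?_, fun z => ?_⟩
  · rw [ContinuousLinearMap.coe_coe, ← inner_conj_symm, h_inner, h_inner, inner_conj_symm]
  · rw [ContinuousLinearMap.reApplyInnerSelf_apply, ← inner_re_symm, h_inner]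
    exact inner_self_nonneg

lemma isSelfAdjoint_formResolvent : IsSelfAdjoint (formResolvent K) :=
  (isPositive_formResolvent K).isSelfAdjoint

lemma norm_formResolvent_le_one : ‖formResolvent K‖ ≤ 1 := by
  have h_norm_fst : ‖WithLp.fstL 2 ℂ H G‖ ≤ 1 :=
    ContinuousLinearMap.opNorm_le_bound _ zero_le_one fun x => by
      rw [one_mul]
      exact WithLp.norm_fst_le ..
  refine (ContinuousLinearMap.opNorm_comp_le _ _).trans (mul_le_one₀ h_norm_fst (norm_nonneg _) ?_)
  refine (ContinuousLinearMap.opNorm_comp_le _ _).trans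
    (mul_le_one₀ K.starProjection_norm_le (norm_nonneg _) ?_)
  rwa [LinearIsometryEquiv.norm_map]

lemma spectrum_formResolvent_subset : spectrum ℝ (formResolvent K) ⊆ Set.Icc 0 1 :=
  spectrum_subset_Icc_of_isPositive (isPositive_formResolvent K) (norm_formResolvent_le_one K)

/-- `(1 - s𝔏)⁻¹ f` minimizes `v ↦ ‖v - f‖² + s‖∇v‖²`, with a quadratic gap. -/
lemma exists_formResolvent_minimizer {s : ℝ} (hs : 0 < s) (f : H) :
    ∃ u ∈ K, u.fst = cfc (resolventSymbol s) (formResolvent K) f ∧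
      ∀ k ∈ K, ‖k.fst - u.fst‖ ^ 2 + (‖u.fst - f‖ ^ 2 + s * ‖u.snd‖ ^ 2) ≤
        ‖k.fst - f‖ ^ 2 + s * ‖k.snd‖ ^ 2 := by
  obtain ⟨z, hz, hf⟩ := exists_cfc_resolventSymbol_eq (isSelfAdjoint_formResolvent K)
    (spectrum_formResolvent_subset K) hs f
  set u := formLift K z
  have hu : u.fst = cfc (resolventSymbol s) (formResolvent K) f := hz.symm
  refine ⟨u, formLift_mem K z, hu, fun k hk => ?_⟩
  have h_euler : inner ℂ (u.fst - f) (k.fst - u.fst) = -(s * inner ℂ u.snd (k.snd - u.snd)) := by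
    have h := inner_snd_formLift z (K.sub_mem hk (formLift_mem K z))
    rw [WithLp.sub_fst, WithLp.sub_snd] at h
    rw [h, ← neg_sub, inner_neg_left, hu, hf, ← Complex.coe_smul, inner_smul_left,
      Complex.conj_ofReal, ← hz]
  have h_fst := norm_add_sq (𝕜 := ℂ) (u.fst - f) (k.fst - u.fst)
  have h_snd := norm_add_sq (𝕜 := ℂ) u.snd (k.snd - u.snd)
  rw [h_euler] at h_fst
  simp only [sub_add_sub_cancel', add_sub_cancel] at h_fst h_snd
  have h_re : RCLike.re (-(s * inner ℂ u.snd (k.snd - u.snd)))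
    = -(s * RCLike.re (inner ℂ u.snd (k.snd - u.snd))) := by simp
  rw [h_fst, h_snd, h_re]
  nlinarith [mul_nonneg hs.le (sq_nonneg ‖k.snd - u.snd‖)]

variable {K}

/-- As `Φ` fixes `f`, it maps the minimizer of `v ↦ ‖v - f‖² + s‖∇v‖²` to a minimizer. -/
lemma cfc_resolventSymbol_mem_fixedPoints (hΦ : LipschitzWith 1 Φ)
    (h_energy : ∀ k ∈ K, ∀ δ > 0, ∃ k' ∈ K, ‖k'.fst - Φ k.fst‖ ≤ δ ∧ ‖k'.snd‖ ≤ ‖k.snd‖ + δ)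
    {s : ℝ} (hs : 0 < s) {f : H} (hf : Φ f = f) :
    Φ (cfc (resolventSymbol s) (formResolvent K) f) =
      cfc (resolventSymbol s) (formResolvent K) f := by
  obtain ⟨u, huK, hu, h_min⟩ := exists_formResolvent_minimizer K hs f
  rw [← hu]
  have h_le : ∀ δ > 0, ‖Φ u.fst - u.fst‖ ≤ δ +
      √((δ + ‖u.fst - f‖) ^ 2 + s * (‖u.snd‖ + δ) ^ 2 - (‖u.fst - f‖ ^ 2 + s * ‖u.snd‖ ^ 2)) := by
    intro δ hδ
    obtain ⟨k, hkK, h_fst, h_snd⟩ := h_energy u huK δ hδ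
    have h_dist : ‖k.fst - f‖ ≤ δ + ‖u.fst - f‖ := by
      refine (norm_sub_le_norm_sub_add_norm_sub _ (Φ u.fst) _).trans (add_le_add h_fst ?_)
      simpa [hf, dist_eq_norm] using hΦ.dist_le_mul u.fst f
    have h_gap : ‖k.fst - u.fst‖ ≤ √((δ + ‖u.fst - f‖) ^ 2 + s * (‖u.snd‖ + δ) ^ 2 -
        (‖u.fst - f‖ ^ 2 + s * ‖u.snd‖ ^ 2)) := by
      refine Real.le_sqrt_of_sq_le (le_sub_iff_add_le.2 ((h_min k hkK).trans ?_))
      gcongr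
    refine (norm_sub_le_norm_sub_add_norm_sub _ k.fst _).trans (add_le_add ?_ h_gap)
    rwa [norm_sub_rev]
  have h_lim : Tendsto (fun δ : ℝ => δ + √((δ + ‖u.fst - f‖) ^ 2 + s * (‖u.snd‖ + δ) ^ 2 -
      (‖u.fst - f‖ ^ 2 + s * ‖u.snd‖ ^ 2))) (𝓝[>] 0) (𝓝 0) :=
    (Continuous.tendsto' (by fun_prop) 0 0 (by simp)).mono_left nhdsWithin_le_nhds
  exact eq_of_norm_sub_le_zero (ge_of_tendsto h_lim (eventually_mem_nhdsWithin.mono h_le))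

/-- **Beurling–Deny criterion**, by Euler's formula. -/
lemma heatFlow_zero_mem_fixedPoints (hΦ : LipschitzWith 1 Φ) {S : Set (WithLp 2 (H × G))}
    (hKS : (K : Set (WithLp 2 (H × G))) ⊆ closure S)
    (h_energy : ∀ k ∈ S, ∀ δ > 0, ∃ k' ∈ K, ‖k'.fst - Φ k.fst‖ ≤ δ ∧ ‖k'.snd‖ ≤ ‖k.snd‖)
    {t : ℝ} (ht : 0 < t) {f : H} (hf : Φ f = f) :
    Φ (heatFlow (formResolvent K) 0 t f) = heatFlow (formResolvent K) 0 t f :=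
  heatFlow_zero_mem_of_isClosed (C := {f | Φ f = f}) (isSelfAdjoint_formResolvent K)
    (spectrum_formResolvent_subset K) (isClosed_eq hΦ.continuous continuous_id)
    (fun _ hs _ hf => cfc_resolventSymbol_mem_fixedPoints hΦ
      (fun _ hk _ hδ => exists_mem_of_subset_closure hΦ hKS h_energy hk hδ) hs hf) ht hf

end Form

open scoped ContDiff

local notation "ℝ^" d:max => EuclideanSpace ℝ (Fin d)

section Calculus

variable {d : ℕ} {F F' : Type*} [NormedAddCommGroup F] [NormedSpace ℝ F] [NormedAddCommGroup F']
  [NormedSpace ℝ F'] {σ : ℝ} {L : ℝ^d → ℝ}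

/-- The partial derivative `∂ᵢf` of a vector-valued function. -/
noncomputable def pderiv (i : Fin d) (f : ℝ^d → F) (x : ℝ^d) : F :=
  fderiv ℝ f x (EuclideanSpace.single i 1)

/-- The generator `𝔏f = σΔf - ⟨∇L, ∇f⟩` acting on vector-valued functions. -/
noncomputable def langevin (σ : ℝ) (L : ℝ^d → ℝ) (f : ℝ^d → F) (x : ℝ^d) : F :=
  ∑ i, (σ • pderiv i (pderiv i f) x - pderiv i L x • pderiv i f x)

lemma contDiff_pderiv {f : ℝ^d → F} (hf : ContDiff ℝ ∞ f) (i : Fin d) :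
    ContDiff ℝ ∞ (pderiv i f) :=
  (hf.fderiv_right (by simp)).clm_apply contDiff_const

lemma pderiv_add {f g : ℝ^d → F} (hf : Differentiable ℝ f) (hg : Differentiable ℝ g) (i : Fin d) :
    pderiv i (f + g) = pderiv i f + pderiv i g := by
  ext x
  simp only [pderiv, fderiv_add (hf x) (hg x), Pi.add_apply, add_apply]

lemma pderiv_mul {f g : ℝ^d → ℂ} (hf : Differentiable ℝ f) (hg : Differentiable ℝ g) (i : Fin d) :
    pderiv i (f * g) = f * pderiv i g + pderiv i f * g := by
  ext x
  simp only [pderiv, fderiv_mul (hf x) (hg x), Pi.add_apply, Pi.mul_apply, add_apply, smul_apply,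
    smul_eq_mul]
  ring

lemma pderiv_clm_apply (A : F →L[ℝ] F') {f : ℝ^d → F} (hf : Differentiable ℝ f) (i : Fin d) :
    pderiv i (fun x => A (f x)) = fun x => A (pderiv i f x) := by
  ext x
  exact DFunLike.congr_fun (A.hasFDerivAt.comp x (hf x).hasFDerivAt).fderiv
    (EuclideanSpace.single i 1)

lemma pderiv_star {f : ℝ^d → ℂ} (hf : Differentiable ℝ f) (i : Fin d) :
    pderiv i (star f) = star (pderiv i f) :=
  pderiv_clm_apply (Complex.conjCLE : ℂ →L[ℝ] ℂ) hf i

lemma gradient_apply (f : ℝ^d → ℝ) (x : ℝ^d) (i : Fin d) : gradient f x i = pderiv i f x := by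
  rw [pderiv, ← inner_gradient_left, real_inner_comm, EuclideanSpace.inner_single_left]
  simp

lemma generator_eq_langevin (σ : ℝ) (L f : ℝ^d → ℝ) : generator σ L f = langevin σ L f := by
  ext x
  simp only [generator, langevin, PiLp.inner_apply, gradient_apply, RCLike.inner_apply,
    conj_trivial, smul_eq_mul, mul_comm (pderiv _ L x), Finset.sum_sub_distrib, ← Finset.mul_sum]
  rfl

lemma contDiff_langevin (hL : ContDiff ℝ ∞ L) {f : ℝ^d → F} (hf : ContDiff ℝ ∞ f) :
    ContDiff ℝ ∞ (langevin σ L f) :=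
  ContDiff.sum fun i _ => (contDiff_const.smul (contDiff_pderiv (contDiff_pderiv hf i) i)).sub
    ((contDiff_pderiv hL i).smul (contDiff_pderiv hf i))

lemma langevin_clm_apply (A : F →L[ℝ] F') {f : ℝ^d → F} (hf : ContDiff ℝ ∞ f) :
    langevin σ L (fun x => A (f x)) = fun x => A (langevin σ L f x) := by
  ext x
  simp only [langevin, pderiv_clm_apply A (hf.differentiable (by simp)),
    pderiv_clm_apply A ((contDiff_pderiv hf _).differentiable (by simp)), map_sub, map_smul,
    map_sum]

lemma langevin_star {f : ℝ^d → ℂ} (hf : ContDiff ℝ ∞ f) :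
    langevin σ L (star f) = star (langevin σ L f) :=
  langevin_clm_apply (Complex.conjCLE : ℂ →L[ℝ] ℂ) hf

lemma langevin_mul {f g : ℝ^d → ℂ} (hf : ContDiff ℝ ∞ f) (hg : ContDiff ℝ ∞ g) (x : ℝ^d) :
    langevin σ L (f * g) x = f x * langevin σ L g x + 2 * σ * ∑ i, pderiv i f x * pderiv i g x +
      langevin σ L f x * g x := by
  have h_diff {h : ℝ^d → ℂ} (hh : ContDiff ℝ ∞ h) : Differentiable ℝ h :=
    hh.differentiable (by simp)
  have h_fst i : pderiv i (f * g) = f * pderiv i g + pderiv i f * g :=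
    pderiv_mul (h_diff hf) (h_diff hg) i
  have h_snd i : pderiv i (pderiv i (f * g)) = f * pderiv i (pderiv i g) + pderiv i f * pderiv i g +
      (pderiv i f * pderiv i g + pderiv i (pderiv i f) * g) := by
    have hf' := contDiff_pderiv hf i
    have hg' := contDiff_pderiv hg i
    rw [h_fst, pderiv_add (f := f * pderiv i g) (g := pderiv i f * g) (h_diff (hf.mul hg'))
      (h_diff (hf'.mul hg)), pderiv_mul (h_diff hf) (h_diff hg'),
      pderiv_mul (h_diff hf') (h_diff hg)]
  rw [langevin, langevin, langevin, Finset.mul_sum, Finset.mul_sum, Finset.sum_mul,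
    ← Finset.sum_add_distrib, ← Finset.sum_add_distrib]
  refine Finset.sum_congr rfl fun i _ => ?_
  rw [h_snd, h_fst]
  simp only [Pi.add_apply, Pi.mul_apply, Complex.real_smul]
  ring

end Calculus

section TestFunctions

variable {d : ℕ} {f ψ : ℝ^d → ℂ}

/-- The space `C_c^∞(ℝ^d; ℂ)` of test functions. -/
def testFunctions (d : ℕ) : Submodule ℂ (ℝ^d → ℂ) where
  carrier := {ψ | ContDiff ℝ ∞ ψ ∧ HasCompactSupport ψ}
  zero_mem' := ⟨contDiff_const, HasCompactSupport.zero⟩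
  add_mem' hf hg := ⟨hf.1.add hg.1, hf.2.add hg.2⟩
  smul_mem' c _ hf := ⟨hf.1.const_smul c, hf.2.smul_left (f := fun _ => c)⟩

lemma mul_mem_testFunctions (hf : ContDiff ℝ ∞ f) (hψ : ContDiff ℝ ∞ ψ)
    (hc : HasCompactSupport f ∨ HasCompactSupport ψ) : f * ψ ∈ testFunctions d :=
  ⟨hf.mul hψ, hc.elim (·.mul_right) (·.mul_left)⟩

lemma real_smul_mem_testFunctions {c : ℝ^d → ℝ} (hc : ContDiff ℝ ∞ c) (hψ : ψ ∈ testFunctions d) :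
    (fun x => c x • ψ x) ∈ testFunctions d :=
  ⟨hc.smul hψ.1, hψ.2.smul_left (f := c)⟩

lemma star_mem_testFunctions (hψ : ψ ∈ testFunctions d) : star ψ ∈ testFunctions d :=
  ⟨(Complex.conjCLE : ℂ →L[ℝ] ℂ).contDiff.comp hψ.1, hψ.2.comp_left (g := star) (star_zero ℂ)⟩

lemma pderiv_mem_testFunctions (hψ : ψ ∈ testFunctions d) (i : Fin d) :
    pderiv i ψ ∈ testFunctions d :=
  ⟨contDiff_pderiv hψ.1 i, hψ.2.fderiv_apply (𝕜 := ℝ) _⟩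

lemma langevin_mem_testFunctions {σ : ℝ} {L : ℝ^d → ℝ} (hL : ContDiff ℝ ∞ L)
    (hψ : ψ ∈ testFunctions d) : langevin σ L ψ ∈ testFunctions d := by
  have h := sum_mem fun i (_ : i ∈ Finset.univ) => sub_mem
    (Submodule.smul_mem _ (σ : ℂ) (pderiv_mem_testFunctions (pderiv_mem_testFunctions hψ i) i))
    (real_smul_mem_testFunctions (contDiff_pderiv hL i) (pderiv_mem_testFunctions hψ i))
  convert h using 1
  ext x
  simp only [langevin, Finset.sum_apply, Pi.sub_apply, Pi.smul_apply, Complex.real_smul,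
    smul_eq_mul]

lemma integrable_of_mem_testFunctions (μ : Measure (ℝ^d)) [IsFiniteMeasureOnCompacts μ]
    (hψ : ψ ∈ testFunctions d) : Integrable ψ μ :=
  hψ.1.continuous.integrable_of_hasCompactSupport hψ.2

lemma memLp_of_mem_testFunctions (μ : Measure (ℝ^d)) [IsFiniteMeasureOnCompacts μ]
    (hψ : ψ ∈ testFunctions d) : MemLp ψ 2 μ :=
  hψ.1.continuous.memLp_of_hasCompactSupport hψ.2

lemma ae_eq_of_integral_testFunctions (μ : Measure (ℝ^d)) {f g : ℝ^d → ℂ}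
    (hf : LocallyIntegrable f μ) (hg : LocallyIntegrable g μ)
    (h : ∀ ψ ∈ testFunctions d, ∫ x, ψ x * f x ∂μ = ∫ x, ψ x * g x ∂μ) : f =ᵐ[μ] g := by
  refine ae_eq_of_integral_contDiff_smul_eq hf hg fun c hc hcs => ?_
  simpa only [Complex.real_smul] using h (fun x => (c x : ℂ))
    ⟨Complex.ofRealCLM.contDiff.comp hc, hcs.comp_left (g := Complex.ofReal) Complex.ofReal_zero⟩

/-- The inclusion of the test functions in `L²(μ)`. -/
noncomputable def testToLp (μ : Measure (ℝ^d)) [IsFiniteMeasureOnCompacts μ] :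
    testFunctions d →ₗ[ℂ] Lp ℂ 2 μ where
  toFun ψ := (memLp_of_mem_testFunctions μ ψ.2).toLp ψ
  map_add' _ _ := rfl
  map_smul' _ _ := rfl

variable (μ : Measure (ℝ^d)) [IsFiniteMeasureOnCompacts μ]

lemma coeFn_testToLp (ψ : testFunctions d) : testToLp μ ψ =ᵐ[μ] ψ :=
  MemLp.coeFn_toLp (memLp_of_mem_testFunctions μ ψ.2)

lemma inner_testToLp (ψ : testFunctions d) (f : Lp ℂ 2 μ) :
    inner ℂ (testToLp μ ψ) f = ∫ x, star ((ψ : ℝ^d → ℂ) x) * f x ∂μ := by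
  rw [L2.inner_def]
  refine integral_congr_ae ?_
  filter_upwards [coeFn_testToLp μ ψ] with x hx
  rw [hx, RCLike.inner_apply', starRingEnd_apply]

lemma integral_mul_eq_inner_testToLp (hψ : ψ ∈ testFunctions d) (f : Lp ℂ 2 μ) :
    ∫ x, ψ x * f x ∂μ = inner ℂ (testToLp μ ⟨star ψ, star_mem_testFunctions hψ⟩) f := by
  simp only [inner_testToLp, Pi.star_apply, star_star]

end TestFunctions

section Gibbs

variable {d : ℕ} {σ : ℝ} {L : ℝ^d → ℝ}

/-- The (unnormalized) Gibbs measure `e^{-L/σ} dx`. -/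
noncomputable def gibbs (σ : ℝ) (L : ℝ^d → ℝ) : Measure (ℝ^d) :=
  volume.withDensity fun x => ENNReal.ofReal (Real.exp (-L x / σ))

lemma measurable_ofReal_exp_neg_div (σ : ℝ) (hL : Measurable L) :
    Measurable fun x => ENNReal.ofReal (Real.exp (-L x / σ)) :=
  (Real.measurable_exp.comp (hL.neg.div_const σ)).ennreal_ofReal

lemma lintegral_gibbs (σ : ℝ) (hL : Measurable L) {f : ℝ^d → ℝ} (hf : Measurable f) :
    ∫⁻ x, ENNReal.ofReal (f x) ∂gibbs σ L =
      ∫⁻ x, ENNReal.ofReal (f x * Real.exp (-L x / σ)) := by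
  rw [gibbs, lintegral_withDensity_eq_lintegral_mul _ (measurable_ofReal_exp_neg_div σ hL)
    hf.ennreal_ofReal]
  refine lintegral_congr fun x => ?_
  rw [Pi.mul_apply, ← ENNReal.ofReal_mul (Real.exp_nonneg _), mul_comm]

lemma integral_gibbs {F : Type*} [NormedAddCommGroup F] [NormedSpace ℝ F] (σ : ℝ)
    (hL : Measurable L) (f : ℝ^d → F) :
    ∫ x, f x ∂gibbs σ L = ∫ x, Real.exp (-L x / σ) • f x := by
  rw [gibbs, integral_withDensity_eq_integral_toReal_smul (measurable_ofReal_exp_neg_div σ hL)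
    (.of_forall fun _ => ENNReal.ofReal_lt_top)]
  simp only [ENNReal.toReal_ofReal (Real.exp_nonneg _)]

lemma ae_gibbs (σ : ℝ) (hL : Measurable L) : ae (gibbs σ L) = ae volume :=
  le_antisymm (withDensity_absolutelyContinuous _ _).ae_le
    (withDensity_absolutelyContinuous' (measurable_ofReal_exp_neg_div σ hL).aemeasurable
      (.of_forall fun _ => by simp [Real.exp_pos])).ae_le

variable [Fact (ContDiff ℝ ∞ L)]

instance : IsLocallyFiniteMeasure (gibbs σ L) :=
  IsLocallyFiniteMeasure.withDensity_ofReal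
    (Real.continuous_exp.comp ((Fact.out : ContDiff ℝ ∞ L).continuous.neg.div_const σ))

instance : (gibbs σ L).IsOpenPosMeasure :=
  Measure.AbsolutelyContinuous.isOpenPosMeasure (μ := volume)
    (Measure.ae_le_iff_absolutelyContinuous.1
      (ae_gibbs σ (Fact.out : ContDiff ℝ ∞ L).continuous.measurable).ge)

lemma integral_pderiv_sub_gibbs {h : ℝ^d → ℂ} (hh : h ∈ testFunctions d) (i : Fin d) :
    ∫ x, (pderiv i h x - (pderiv i L x / σ) • h x) ∂gibbs σ L = 0 := by
  have hL : ContDiff ℝ ∞ L := Fact.out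
  have hρ : ContDiff ℝ ∞ fun x => Real.exp (-L x / σ) := (hL.neg.div_const σ).exp
  have h_weight x : fderiv ℝ (fun x => Real.exp (-L x / σ)) x (EuclideanSpace.single i 1) =
      -(Real.exp (-L x / σ) * (pderiv i L x / σ)) := by
    have hLx : HasFDerivAt L (fderiv ℝ L x) x := (hL.differentiable (by simp) x).hasFDerivAt
    have h := (hLx.neg.mul_const σ⁻¹).exp
    simp only [Pi.neg_apply, ← div_eq_mul_inv] at h
    rw [h.fderiv]
    simp only [pderiv, smul_apply, neg_apply, smul_eq_mul]
    ring
  have h_ibp := integral_smul_fderiv_eq_neg_fderiv_smul_of_integrable (μ := volume)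
    (f := fun x => Real.exp (-L x / σ)) (g := h) (v := EuclideanSpace.single i 1)
    (integrable_of_mem_testFunctions _ (real_smul_mem_testFunctions (contDiff_pderiv hρ i) hh))
    (integrable_of_mem_testFunctions _
      (real_smul_mem_testFunctions hρ (pderiv_mem_testFunctions hh i)))
    (integrable_of_mem_testFunctions _ (real_smul_mem_testFunctions hρ hh))
    (fun x _ => hρ.differentiable (by simp) x) (fun x _ => hh.1.differentiable (by simp) x)
  simp only [h_weight, neg_smul, integral_neg, neg_neg, mul_smul] at h_ibp
  rw [integral_gibbs σ hL.continuous.measurable]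
  simp only [smul_sub]
  rw [integral_sub, sub_eq_zero]
  · exact h_ibp
  · exact integrable_of_mem_testFunctions _
      (real_smul_mem_testFunctions hρ (pderiv_mem_testFunctions hh i))
  · exact integrable_of_mem_testFunctions _ (real_smul_mem_testFunctions hρ
      (real_smul_mem_testFunctions ((contDiff_pderiv hL i).div_const σ) hh))

variable {f g : ℝ^d → ℂ}

lemma integral_mul_pderiv_gibbs (hf : ContDiff ℝ ∞ f) (hg : ContDiff ℝ ∞ g)
    (hc : HasCompactSupport f ∨ HasCompactSupport g) (i : Fin d) :
    ∫ x, f x * pderiv i g x ∂gibbs σ L =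
      -∫ x, (pderiv i f x - (pderiv i L x / σ) • f x) * g x ∂gibbs σ L := by
  have hL : ContDiff ℝ ∞ L := Fact.out
  have hfg := mul_mem_testFunctions hf hg hc
  have h_left : f * pderiv i g ∈ testFunctions d :=
    mul_mem_testFunctions hf (contDiff_pderiv hg i)
      (hc.imp_right fun h => h.fderiv_apply (𝕜 := ℝ) _)
  have h_prod : pderiv i (f * g) = f * pderiv i g + pderiv i f * g :=
    pderiv_mul (hf.differentiable (by simp)) (hg.differentiable (by simp)) i
  have h_right := sub_mem (sub_mem (pderiv_mem_testFunctions hfg i) h_left)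
    (real_smul_mem_testFunctions ((contDiff_pderiv hL i).div_const σ) hfg)
  rw [← add_eq_zero_iff_eq_neg, ← integral_pderiv_sub_gibbs (σ := σ) (L := L) hfg i, ← integral_add]
  · refine integral_congr_ae (.of_forall fun x => ?_)
    simp only [h_prod, Pi.add_apply, Pi.mul_apply, Complex.real_smul]
    ring
  · exact integrable_of_mem_testFunctions _ h_left
  · refine (integrable_of_mem_testFunctions _ h_right).congr (.of_forall fun x => ?_)
    simp only [h_prod, Pi.add_apply, Pi.mul_apply, Pi.sub_apply, Complex.real_smul]
    ring

/-- **Green's formula**: `-𝔏` is the operator of the Dirichlet form `σ ∫ ⟨∇f, ∇g⟩`. -/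
lemma integral_mul_langevin_gibbs (hσ : σ ≠ 0) (hf : ContDiff ℝ ∞ f) (hg : ContDiff ℝ ∞ g)
    (hc : HasCompactSupport f ∨ HasCompactSupport g) :
    ∫ x, f x * langevin σ L g x ∂gibbs σ L =
      -(σ * ∑ i, ∫ x, pderiv i f x * pderiv i g x ∂gibbs σ L) := by
  have hL : ContDiff ℝ ∞ L := Fact.out
  have h_cs i : HasCompactSupport f ∨ HasCompactSupport (pderiv i g) :=
    hc.imp_right fun h => h.fderiv_apply (𝕜 := ℝ) _
  have h_fst i : Integrable (fun x => pderiv i f x * pderiv i g x) (gibbs σ L) :=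
    integrable_of_mem_testFunctions _ (mul_mem_testFunctions (contDiff_pderiv hf i)
      (contDiff_pderiv hg i) ((h_cs i).imp_left fun h => h.fderiv_apply (𝕜 := ℝ) _))
  have h_snd i : Integrable (fun x => f x * pderiv i (pderiv i g) x) (gibbs σ L) :=
    integrable_of_mem_testFunctions _ (mul_mem_testFunctions hf
      (contDiff_pderiv (contDiff_pderiv hg i) i)
      ((h_cs i).imp_right fun h => h.fderiv_apply (𝕜 := ℝ) _))
  have h_drift i : Integrable (fun x => (pderiv i L x / σ) • (f x * pderiv i g x)) (gibbs σ L) :=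
    integrable_of_mem_testFunctions _ (real_smul_mem_testFunctions
      ((contDiff_pderiv hL i).div_const σ)
      (mul_mem_testFunctions hf (contDiff_pderiv hg i) (h_cs i)))
  have h_ibp i : ∫ x, (f x * pderiv i (pderiv i g) x -
      (pderiv i L x / σ) • (f x * pderiv i g x)) ∂gibbs σ L =
      -∫ x, pderiv i f x * pderiv i g x ∂gibbs σ L := by
    rw [integral_sub (h_snd i) (h_drift i),
      integral_mul_pderiv_gibbs hf (contDiff_pderiv hg i) (h_cs i)]
    simp only [sub_mul, smul_mul_assoc]
    rw [integral_sub (h_fst i) (h_drift i)]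
    ring
  have h_term x i : f x * (σ • pderiv i (pderiv i g) x - pderiv i L x • pderiv i g x) =
      σ * (f x * pderiv i (pderiv i g) x - (pderiv i L x / σ) • (f x * pderiv i g x)) := by
    have := Complex.ofReal_ne_zero.2 hσ
    simp only [Complex.real_smul, Complex.ofReal_div]
    field_simp
  simp only [langevin, Finset.mul_sum, h_term]
  rw [integral_finsetSum]
  · simp only [integral_const_mul, h_ibp, mul_neg, Finset.sum_neg_distrib]
  · exact fun i _ => ((h_snd i).sub (h_drift i)).const_mul (σ : ℂ)

lemma integral_mul_langevin_comm (hσ : σ ≠ 0) (hf : ContDiff ℝ ∞ f) (hg : ContDiff ℝ ∞ g)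
    (hc : HasCompactSupport f ∨ HasCompactSupport g) :
    ∫ x, f x * langevin σ L g x ∂gibbs σ L = ∫ x, langevin σ L f x * g x ∂gibbs σ L := by
  rw [integral_mul_langevin_gibbs hσ hf hg hc]
  simp only [mul_comm _ (g _), integral_mul_langevin_gibbs hσ hg hf hc.symm,
    mul_comm (pderiv _ f _)]

end Gibbs

section DirichletForm

variable {d : ℕ} (σ : ℝ) (L : ℝ^d → ℝ) [Fact (ContDiff ℝ ∞ L)]

/-- The partial derivative `∂ᵢ` as an operator on the test functions. -/
noncomputable def testPDeriv (i : Fin d) : testFunctions d →ₗ[ℂ] testFunctions d where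
  toFun ψ := ⟨pderiv i ψ, pderiv_mem_testFunctions ψ.2 i⟩
  map_add' ψ φ := Subtype.ext (pderiv_add (ψ.2.1.differentiable (by simp))
    (φ.2.1.differentiable (by simp)) i)
  map_smul' c ψ := Subtype.ext (pderiv_clm_apply (c • ContinuousLinearMap.id ℝ ℂ)
    (ψ.2.1.differentiable (by simp)) i)

/-- The generator `𝔏` as an operator on the test functions. -/
noncomputable def testLangevin (ψ : testFunctions d) : testFunctions d :=
  ⟨langevin σ L ψ, langevin_mem_testFunctions Fact.out ψ.2⟩

/-- The pair `(ψ, √σ ∇ψ)`, as an element of `L²(π) × L²(π)^d`. -/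
noncomputable def testGraph : testFunctions d →ₗ[ℂ]
    WithLp 2 (Lp ℂ 2 (gibbs σ L) × PiLp 2 fun _ : Fin d => Lp ℂ 2 (gibbs σ L)) :=
  (WithLp.linearEquiv 2 ℂ _).symm.toLinearMap ∘ₗ (testToLp (gibbs σ L)).prod
    ((WithLp.linearEquiv 2 ℂ (Fin d → Lp ℂ 2 (gibbs σ L))).symm.toLinearMap ∘ₗ
      LinearMap.pi fun i => ((√σ : ℝ) : ℂ) • testToLp (gibbs σ L) ∘ₗ testPDeriv i)

/-- The graph of the closure of `√σ ∇`, that is, of the weighted gradient on the form domain of the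
Dirichlet form `σ ∫ ‖∇u‖² dπ`. -/
noncomputable def dirichletGraph :
    Submodule ℂ (WithLp 2 (Lp ℂ 2 (gibbs σ L) × PiLp 2 fun _ : Fin d => Lp ℂ 2 (gibbs σ L))) :=
  (LinearMap.range (testGraph σ L)).topologicalClosure

instance : (dirichletGraph σ L).HasOrthogonalProjection :=
  inferInstanceAs (Submodule.HasOrthogonalProjection (Submodule.topologicalClosure _))

variable {σ L}

lemma fst_testGraph (ψ : testFunctions d) : (testGraph σ L ψ).fst = testToLp (gibbs σ L) ψ := rfl

lemma snd_testGraph (ψ : testFunctions d) (i : Fin d) :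
    (testGraph σ L ψ).snd i = ((√σ : ℝ) : ℂ) • testToLp (gibbs σ L) (testPDeriv i ψ) := rfl

lemma dirichletGraph_subset_closure :
    (dirichletGraph σ L : Set _) ⊆ closure (Set.range (testGraph σ L)) := by
  rw [dirichletGraph, Submodule.topologicalClosure_coe, LinearMap.coe_range]

lemma testGraph_mem (ψ : testFunctions d) : testGraph σ L ψ ∈ dirichletGraph σ L :=
  Submodule.le_topologicalClosure _ ⟨ψ, rfl⟩

lemma dirichletGraph_induction
    {p : WithLp 2 (Lp ℂ 2 (gibbs σ L) × PiLp 2 fun _ : Fin d => Lp ℂ 2 (gibbs σ L)) → Prop}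
    (hp : IsClosed {k | p k}) (h : ∀ ψ, p (testGraph σ L ψ)) :
    ∀ k ∈ dirichletGraph σ L, p k := fun _ hk =>
  closure_minimal (Set.range_subset_iff.2 h) hp (dirichletGraph_subset_closure hk)

lemma inner_testToLp_testToLp (μ : Measure (ℝ^d)) [IsFiniteMeasureOnCompacts μ]
    (ψ φ : testFunctions d) : inner ℂ (testToLp μ ψ) (testToLp μ φ) =
      ∫ x, star ((ψ : ℝ^d → ℂ) x) * (φ : ℝ^d → ℂ) x ∂μ := by
  rw [inner_testToLp]
  refine integral_congr_ae ?_
  filter_upwards [coeFn_testToLp μ φ] with x hx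
  rw [hx]

lemma inner_snd_testGraph (hσ : 0 < σ) (ψ φ : testFunctions d) :
    inner ℂ (testGraph σ L ψ).snd (testGraph σ L φ).snd =
      -inner ℂ (testToLp (gibbs σ L) (testLangevin σ L ψ)) (testToLp (gibbs σ L) φ) := by
  have h_sqrt : ((√σ : ℝ) : ℂ) * ((√σ : ℝ) : ℂ) = σ := by
    rw [← Complex.ofReal_mul, Real.mul_self_sqrt hσ.le]
  have h_green := integral_mul_langevin_gibbs (L := L) hσ.ne' φ.2.1 (star_mem_testFunctions ψ.2).1
    (.inl φ.2.2)
  simp only [pderiv_star (ψ.2.1.differentiable (by simp)), langevin_star ψ.2.1] at h_green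
  rw [inner_testToLp_testToLp, PiLp.inner_apply]
  simp only [snd_testGraph, inner_smul_left, inner_smul_right, inner_testToLp_testToLp,
    Complex.conj_ofReal, ← mul_assoc, h_sqrt, ← Finset.mul_sum]
  simp only [mul_comm (star _)]
  exact neg_eq_iff_eq_neg.1 h_green.symm

lemma testToLp_eq_formResolvent (hσ : 0 < σ) (ψ : testFunctions d) :
    testToLp (gibbs σ L) ψ = formResolvent (dirichletGraph σ L)
      (testToLp (gibbs σ L) ψ - testToLp (gibbs σ L) (testLangevin σ L ψ)) := by
  rw [← fst_formLift, ← eq_formLift (testGraph_mem ψ), fst_testGraph]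
  refine dirichletGraph_induction (isClosed_eq (by fun_prop) (by fun_prop)) fun φ => ?_
  rw [inner_sub_left, sub_eq_add_neg, fst_testGraph, ← inner_snd_testGraph hσ]
  exact WithLp.prod_inner_apply _ _

/-- The families that behave like `m ↦ 𝔏ᵐ u` for a solution `u` of `∂ₜu = 𝔏u` with values in
`L²(π)`, where `𝔏` is understood in the sense of distributions. -/
structure IsWeakFlow (σ : ℝ) (L : ℝ^d → ℝ) (y : ℕ → ℝ → Lp ℂ 2 (gibbs σ L)) : Prop where
  hasDerivAt : ∀ m, ∀ t > 0, HasDerivAt (y m) (y (m + 1) t) t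
  integral_mul_succ : ∀ ψ ∈ testFunctions d, ∀ m, ∀ t > 0,
    ∫ x, ψ x * y (m + 1) t x ∂gibbs σ L = ∫ x, langevin σ L ψ x * y m t x ∂gibbs σ L

lemma isWeakFlow_heatFlow (hσ : 0 < σ) (f : Lp ℂ 2 (gibbs σ L)) :
    IsWeakFlow σ L fun m t => heatFlow (formResolvent (dirichletGraph σ L)) m t f where
  hasDerivAt m t ht :=
    ((ContinuousLinearMap.apply ℂ (Lp ℂ 2 (gibbs σ L)) f).restrictScalars ℝ).hasFDerivAt
      |>.comp_hasDerivAt t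
      (hasDerivAt_heatFlow (spectrum_formResolvent_subset (dirichletGraph σ L)) m ht)
  integral_mul_succ ψ hψ m t ht := by
    set φ : testFunctions d := ⟨star ψ, star_mem_testFunctions hψ⟩
    have h := inner_heatFlow_succ (isSelfAdjoint_formResolvent (dirichletGraph σ L))
      (spectrum_formResolvent_subset _) m ht
      (testToLp (gibbs σ L) φ - testToLp (gibbs σ L) (testLangevin σ L φ)) f
    rw [← testToLp_eq_formResolvent hσ, sub_sub_cancel] at h
    simpa only [inner_testToLp, φ, testLangevin, langevin_star hψ.1, Pi.star_apply,
      star_star] using h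

lemma integral_mul_snd_of_mem_dirichletGraph
    {k : WithLp 2 (Lp ℂ 2 (gibbs σ L) × PiLp 2 fun _ : Fin d => Lp ℂ 2 (gibbs σ L))}
    (hk : k ∈ dirichletGraph σ L) {ψ : ℝ^d → ℂ} (hψ : ψ ∈ testFunctions d) (i : Fin d) :
    ∫ x, ψ x * k.snd i x ∂gibbs σ L =
      -(√σ * ∫ x, (pderiv i ψ x - (pderiv i L x / σ) • ψ x) * k.fst x ∂gibbs σ L) := by
  have hθ : (fun x => pderiv i ψ x - (pderiv i L x / σ) • ψ x) ∈ testFunctions d :=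
    sub_mem (pderiv_mem_testFunctions hψ i) (real_smul_mem_testFunctions
      ((contDiff_pderiv Fact.out i).div_const σ) hψ)
  rw [integral_mul_eq_inner_testToLp _ hψ, integral_mul_eq_inner_testToLp _ hθ]
  refine dirichletGraph_induction (p := fun k => inner ℂ _ (k.snd i) = -(√σ * inner ℂ _ k.fst))
    (isClosed_eq (by fun_prop) (by fun_prop)) (fun φ => ?_) k hk
  rw [snd_testGraph, fst_testGraph, inner_smul_right, inner_testToLp_testToLp,
    inner_testToLp_testToLp, ← mul_neg]
  simp only [Pi.star_apply, star_star]
  exact congrArg _ (integral_mul_pderiv_gibbs hψ.1 φ.2.1 (.inl hψ.2) i)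

lemma snd_ae_eq_of_mem_dirichletGraph
    {k : WithLp 2 (Lp ℂ 2 (gibbs σ L) × PiLp 2 fun _ : Fin d => Lp ℂ 2 (gibbs σ L))}
    (hk : k ∈ dirichletGraph σ L) {u : ℝ^d → ℂ} (hu : ContDiff ℝ ∞ u)
    (h_fst : k.fst =ᵐ[gibbs σ L] u) (i : Fin d) :
    k.snd i =ᵐ[gibbs σ L] fun x => √σ * pderiv i u x := by
  refine ae_eq_of_integral_testFunctions _ ((Lp.memLp (k.snd i)).locallyIntegrable one_le_two)
    (continuous_const.mul (contDiff_pderiv hu i).continuous).locallyIntegrable fun ψ hψ => ?_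
  rw [integral_mul_snd_of_mem_dirichletGraph hk hψ,
    integral_congr_ae (h_fst.mono fun x hx => congrArg (_ * ·) hx), ← mul_neg,
    ← integral_mul_pderiv_gibbs hψ.1 hu (.inl hψ.2), ← integral_const_mul]
  simp only [mul_left_comm]

end DirichletForm

section Positivity

variable {d : ℕ} {σ : ℝ} {L : ℝ^d → ℝ} {ε : ℝ} {ψ : ℝ^d → ℂ}

lemma lipschitzWith_ofReal_norm : LipschitzWith 1 fun z : ℂ => ((‖z‖ : ℝ) : ℂ) :=
  LipschitzWith.mk_one fun x y => by
    rw [Complex.isometry_ofReal.dist_eq, dist_eq_norm x]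
    exact abs_norm_sub_norm_le x y

/-- The pointwise modulus `f ↦ |f|` on `L²(μ)`. -/
noncomputable def absLp {α : Type*} [MeasurableSpace α] {μ : Measure α} : Lp ℂ 2 μ → Lp ℂ 2 μ :=
  lipschitzWith_ofReal_norm.compLp (by simp)

lemma coeFn_absLp {α : Type*} [MeasurableSpace α] {μ : Measure α} (f : Lp ℂ 2 μ) :
    absLp f =ᵐ[μ] fun x => ((‖f x‖ : ℝ) : ℂ) :=
  LipschitzWith.coeFn_compLp ..

/-- A smooth approximation of `|ψ|` that vanishes wherever `ψ` does. -/
noncomputable def smoothAbs (ε : ℝ) (ψ : ℝ^d → ℂ) (x : ℝ^d) : ℂ :=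
  ((√(‖ψ x‖ ^ 2 + ε ^ 2) - ε : ℝ) : ℂ)

lemma smoothAbs_of_eq_zero (hε : 0 < ε) {x : ℝ^d} (hx : ψ x = 0) : smoothAbs ε ψ x = 0 := by
  simp [smoothAbs, hx, Real.sqrt_sq hε.le]

lemma smoothAbs_mem_testFunctions (hε : 0 < ε) (hψ : ψ ∈ testFunctions d) :
    smoothAbs ε ψ ∈ testFunctions d := by
  have h_smooth : ContDiff ℝ ∞ fun x => √(‖ψ x‖ ^ 2 + ε ^ 2) - ε :=
    (((hψ.1.norm_sq ℝ).add contDiff_const).sqrt fun x => by positivity).sub contDiff_const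
  exact ⟨Complex.ofRealCLM.contDiff.comp h_smooth,
    hψ.2.mono fun x => mt (smoothAbs_of_eq_zero hε)⟩

lemma norm_smoothAbs_sub_le (hε : 0 < ε) (ψ : ℝ^d → ℂ) (x : ℝ^d) :
    ‖smoothAbs ε ψ x - ((‖ψ x‖ : ℝ) : ℂ)‖ ≤ ε := by
  have h_le : ‖ψ x‖ ≤ √(‖ψ x‖ ^ 2 + ε ^ 2) := Real.le_sqrt_of_sq_le (by nlinarith)
  have h_ge : √(‖ψ x‖ ^ 2 + ε ^ 2) ≤ ‖ψ x‖ + ε :=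
    Real.sqrt_le_iff.2 ⟨by positivity, by nlinarith [norm_nonneg (ψ x)]⟩
  rw [smoothAbs, ← Complex.ofReal_sub, Complex.norm_real, Real.norm_eq_abs, abs_le]
  constructor <;> linarith

lemma norm_pderiv_smoothAbs_le (hε : 0 < ε) (hψ : Differentiable ℝ ψ) (i : Fin d) (x : ℝ^d) :
    ‖pderiv i (smoothAbs ε ψ) x‖ ≤ ‖pderiv i ψ x‖ := by
  have h_pos : 0 < ‖ψ x‖ ^ 2 + ε ^ 2 := by positivity
  set s := √(‖ψ x‖ ^ 2 + ε ^ 2)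
  have hs : 0 < s := Real.sqrt_pos.2 h_pos
  have h_le : ‖ψ x‖ ≤ s := Real.le_sqrt_of_sq_le (by nlinarith)
  have h_deriv := Complex.ofRealCLM.hasFDerivAt.comp x
    ((((hψ x).hasFDerivAt.norm_sq.add_const (ε ^ 2)).sqrt h_pos.ne').sub_const ε)
  have h_eq : pderiv i (smoothAbs ε ψ) x = ((⟪ψ x, pderiv i ψ x⟫ / s : ℝ) : ℂ) := by
    rw [pderiv, show fderiv ℝ (smoothAbs ε ψ) x = _ from h_deriv.fderiv]
    simp only [pderiv, ContinuousLinearMap.comp_apply, smul_apply, innerSL_apply_apply,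
      nsmul_eq_mul, smul_eq_mul, Complex.ofRealCLM_apply]
    congr 1
    push_cast
    field_simp
    exact mul_comm _ s
  rw [h_eq, Complex.norm_real, Real.norm_eq_abs, abs_div, abs_of_pos hs, div_le_iff₀ hs]
  calc |⟪ψ x, pderiv i ψ x⟫| ≤ ‖ψ x‖ * ‖pderiv i ψ x‖ := abs_real_inner_le_norm _ _
    _ ≤ s * ‖pderiv i ψ x‖ := by gcongr
    _ = ‖pderiv i ψ x‖ * s := mul_comm _ _

lemma exists_norm_smoothAbs_sub_absLp_le (μ : Measure (ℝ^d)) [IsFiniteMeasureOnCompacts μ]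
    (ψ : testFunctions d) {δ : ℝ} (hδ : 0 < δ) : ∃ ε, ∃ hε : 0 < ε,
      ‖testToLp μ ⟨smoothAbs ε ψ, smoothAbs_mem_testFunctions hε ψ.2⟩ -
        absLp (testToLp μ ψ)‖ ≤ δ := by
  have h_compact : IsCompact (tsupport (ψ : ℝ^d → ℂ)) := ψ.2.2
  set u : Lp ℝ 2 μ := indicatorConstLp 2 h_compact.measurableSet h_compact.measure_ne_top 1
  have hε : 0 < δ / (‖u‖ + 1) := by positivity
  refine ⟨_, hε, ?_⟩
  refine (Lp.norm_le_mul_norm_of_ae_le_mul (g := u) (c := δ / (‖u‖ + 1)) ?_).trans ?_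
  · filter_upwards [Lp.coeFn_sub (testToLp μ ⟨_, smoothAbs_mem_testFunctions hε ψ.2⟩)
      (absLp (testToLp μ ψ)), coeFn_testToLp μ ⟨_, smoothAbs_mem_testFunctions hε ψ.2⟩,
      coeFn_absLp (testToLp μ ψ), coeFn_testToLp μ ψ, indicatorConstLp_coeFn (p := 2)
        (hs := h_compact.measurableSet) (hμs := h_compact.measure_ne_top (μ := μ)) (c := (1 : ℝ))]
      with x h_sub h_smooth h_abs h_ψ hu
    rw [h_sub, Pi.sub_apply, h_smooth, h_abs, h_ψ, hu]
    by_cases hx : x ∈ tsupport (ψ : ℝ^d → ℂ)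
    · simpa [hx] using norm_smoothAbs_sub_le hε ψ x
    · simp [hx, image_eq_zero_of_notMem_tsupport hx,
        smoothAbs_of_eq_zero hε (image_eq_zero_of_notMem_tsupport hx)]
  · rw [div_mul_eq_mul_div]
    exact div_le_of_le_mul₀ (by positivity) hδ.le (by gcongr; linarith)

variable [Fact (ContDiff ℝ ∞ L)]

lemma norm_snd_testGraph_le {φ ψ : testFunctions d}
    (h : ∀ i x, ‖pderiv i (φ : ℝ^d → ℂ) x‖ ≤ ‖pderiv i (ψ : ℝ^d → ℂ) x‖) :
    ‖(testGraph σ L φ).snd‖ ≤ ‖(testGraph σ L ψ).snd‖ := by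
  rw [PiLp.norm_eq_of_L2, PiLp.norm_eq_of_L2]
  gcongr with i
  rw [snd_testGraph, snd_testGraph, norm_smul, norm_smul]
  gcongr
  refine Lp.norm_le_norm_of_ae_le ?_
  filter_upwards [coeFn_testToLp (gibbs σ L) (testPDeriv i φ),
    coeFn_testToLp (gibbs σ L) (testPDeriv i ψ)] with x hφ hψ
  rw [hφ, hψ]
  exact h i x

lemma absLp_heatFlow_zero {t : ℝ} (ht : 0 < t) {f : Lp ℂ 2 (gibbs σ L)} (hf : absLp f = f) :
    absLp (heatFlow (formResolvent (dirichletGraph σ L)) 0 t f) =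
      heatFlow (formResolvent (dirichletGraph σ L)) 0 t f := by
  refine heatFlow_zero_mem_fixedPoints (LipschitzWith.lipschitzWith_compLp _ _)
    dirichletGraph_subset_closure ?_ ht hf
  rintro _ ⟨ψ, rfl⟩ δ hδ
  obtain ⟨ε, hε, h⟩ := exists_norm_smoothAbs_sub_absLp_le (gibbs σ L) ψ hδ
  exact ⟨_, testGraph_mem _, h, norm_snd_testGraph_le fun i x =>
    norm_pderiv_smoothAbs_le hε (ψ.2.1.differentiable (by simp)) i x⟩

end Positivity

section Fourier

open scoped FourierTransform

variable {V : Type*} [NormedAddCommGroup V] [InnerProductSpace ℝ V] [FiniteDimensional ℝ V]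
  [MeasurableSpace V] [BorelSpace V]

lemma integral_fourier_mul_eq {f g : V → ℂ} (hf : Integrable f) (hg : Integrable g) :
    ∫ x, 𝓕 f x * g x = ∫ x, f x * 𝓕 g x := by
  have h := VectorFourier.integral_fourierIntegral_smul_eq_flip (L := innerₗ V)
    Real.continuous_fourierChar continuous_inner hf hg
  rwa [flip_innerₗ] at h

lemma integral_mul_fourierInv_fourier (ψ : SchwartzMap V ℂ) {f : V → ℂ} (hf : Integrable f)
    (h_int : Integrable (𝓕 f)) : ∫ x, ψ x * 𝓕⁻ (𝓕 f) x = ∫ x, ψ x * f x := by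
  have h_swap {f g : V → ℂ} (hf : Integrable f) (hg : Integrable g) :
      ∫ x, f x * 𝓕⁻ g x = ∫ x, 𝓕⁻ f x * g x := by
    simp only [Real.fourierInv_eq_fourier_comp_neg (V := V) f,
      integral_fourier_mul_eq hf.comp_neg hg]
    rw [← integral_neg_eq_self]
    simp only [Real.fourierInv_eq_fourier_neg, neg_neg]
  calc ∫ x, ψ x * 𝓕⁻ (𝓕 f) x = ∫ x, (𝓕⁻ ψ) x * 𝓕 f x := by
        rw [h_swap ψ.integrable h_int, SchwartzMap.fourierInv_coe]
    _ = ∫ x, 𝓕 (𝓕⁻ ψ) x * f x := by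
        rw [SchwartzMap.fourier_coe, integral_fourier_mul_eq (𝓕⁻ ψ).integrable hf]
    _ = ∫ x, ψ x * f x := by rw [FourierTransform.fourier_fourierInv_eq]

lemma fourierInv_fourier_ae_eq {f : V → ℂ} (hf : Integrable f) (h_int : Integrable (𝓕 f)) :
    𝓕⁻ (𝓕 f) =ᵐ[volume] f := by
  have h_cont : Continuous (𝓕⁻ (𝓕 f)) := by
    rw [funext (Real.fourierInv_eq_fourier_neg _)]
    exact (VectorFourier.fourierIntegral_continuous Real.continuous_fourierChar continuous_inner
      h_int).comp continuous_neg
  refine ae_eq_of_integral_contDiff_smul_eq h_cont.locallyIntegrable hf.locallyIntegrable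
    fun c hc hcs => ?_
  have h_supp : HasCompactSupport fun x => (c x : ℂ) := hcs.comp_left Complex.ofReal_zero
  exact integral_mul_fourierInv_fourier
    (h_supp.toSchwartzMap (Complex.ofRealCLM.contDiff.comp hc)) hf h_int

end Fourier

section FourierFlow

open scoped FourierTransform

variable {V : Type*} [NormedAddCommGroup V] [InnerProductSpace ℝ V] {u : ℕ → ℝ → V → ℂ}

/-- A time-dependent family of functions with `∂ₜ (u m) = u (m + 1)` for `t > 0`, all of which decay
faster than any power, locally uniformly in time. -/
structure IsDecayingFlow (u : ℕ → ℝ → V → ℂ) : Prop where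
  continuous : ∀ m, ∀ t > 0, Continuous (u m t)
  hasDerivAt : ∀ m, ∀ t > 0, ∀ v, HasDerivAt (fun s => u m s v) (u (m + 1) t v) t
  exists_decay : ∀ (n m : ℕ) (a b : ℝ), 0 < a →
    ∃ C, ∀ t ∈ Set.Icc a b, ∀ v, (1 + ‖v‖) ^ n * ‖u m t v‖ ≤ C

namespace IsDecayingFlow

lemma inner_smul (hu : IsDecayingFlow u) (c : ℂ) (w : V) :
    IsDecayingFlow fun m t v => (c * ⟪v, w⟫) • u m t v where
  continuous m t ht := by have := hu.continuous m t ht; fun_prop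
  hasDerivAt m t ht v := (hu.hasDerivAt m t ht v).const_smul (c * ⟪v, w⟫ : ℂ)
  exists_decay n m a b ha := by
    obtain ⟨C, hC⟩ := hu.exists_decay (n + 1) m a b ha
    refine ⟨‖c‖ * ‖w‖ * C, fun t ht v => ?_⟩
    calc (1 + ‖v‖) ^ n * ‖(c * ⟪v, w⟫) • u m t v‖
        = ‖c‖ * |⟪v, w⟫| * ((1 + ‖v‖) ^ n * ‖u m t v‖) := by
          rw [norm_smul, norm_mul, Complex.norm_real, Real.norm_eq_abs]; ring
      _ ≤ ‖c‖ * ((1 + ‖v‖) * ‖w‖) * ((1 + ‖v‖) ^ n * ‖u m t v‖) := by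
          gcongr
          exact (abs_real_inner_le_norm v w).trans (by gcongr; linarith)
      _ = ‖c‖ * ‖w‖ * ((1 + ‖v‖) ^ (n + 1) * ‖u m t v‖) := by ring
      _ ≤ ‖c‖ * ‖w‖ * C := by gcongr; exact hC t ht v

/-- The derivative at `(t, w)` of the integrand of the Fourier transform of `u m t` at `w`. -/
noncomputable def integrandFDeriv (u : ℕ → ℝ → V → ℂ) (m : ℕ) (v : V) (p : ℝ × V) :
    ℝ × V →L[ℝ] ℂ :=
  (ContinuousLinearMap.fst ℝ ℝ V).smulRight (𝐞 (-⟪v, p.2⟫) • u (m + 1) p.1 v) +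
    ((innerSL ℝ v).comp (ContinuousLinearMap.snd ℝ ℝ V)).smulRight
      (𝐞 (-⟪v, p.2⟫) • (-(2 * Real.pi * Complex.I)) • u m p.1 v)

lemma integrandFDeriv_apply (m : ℕ) (v : V) (p q : ℝ × V) : integrandFDeriv u m v p q =
    q.1 • 𝐞 (-⟪v, p.2⟫) • u (m + 1) p.1 v +
      𝐞 (-⟪v, p.2⟫) • (-(2 * Real.pi * Complex.I) * ⟪v, q.2⟫) • u m p.1 v := by
  simp only [integrandFDeriv, add_apply, ContinuousLinearMap.smulRight_apply,
    ContinuousLinearMap.comp_apply, innerSL_apply_apply, ContinuousLinearMap.coe_fst',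
    ContinuousLinearMap.coe_snd', Circle.smul_def, ← Complex.coe_smul, smul_eq_mul]
  ring

lemma norm_integrandFDeriv_le (m : ℕ) (v : V) (p : ℝ × V) :
    ‖integrandFDeriv u m v p‖ ≤
      ‖u (m + 1) p.1 v‖ + 2 * Real.pi * (‖v‖ * ‖u m p.1 v‖) := by
  refine (ContinuousLinearMap.opNorm_add_le _ _).trans (add_le_add ?_ ?_)
  · refine (ContinuousLinearMap.norm_smulRight_apply (ContinuousLinearMap.fst ℝ ℝ V) _).trans_le ?_
    rw [Circle.norm_smul]
    exact mul_le_of_le_one_left (norm_nonneg _) (ContinuousLinearMap.norm_fst_le ℝ ℝ V)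
  · have h_norm : ‖(innerSL ℝ v).comp (ContinuousLinearMap.snd ℝ ℝ V)‖ ≤ ‖v‖ := by
      refine (ContinuousLinearMap.opNorm_comp_le _ _).trans ?_
      rw [innerSL_apply_norm]
      exact mul_le_of_le_one_right (norm_nonneg _) (ContinuousLinearMap.norm_snd_le ℝ ℝ V)
    have h_const : ‖-(2 * Real.pi * Complex.I)‖ = 2 * Real.pi := by
      simp [abs_of_pos Real.pi_pos]
    rw [ContinuousLinearMap.norm_smulRight_apply _ _, Circle.norm_smul, norm_smul, h_const,
      mul_left_comm]
    gcongr

lemma hasFDerivAt_integrand (hu : IsDecayingFlow u) (m : ℕ) (v : V) {p : ℝ × V} (hp : 0 < p.1) :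
    HasFDerivAt (fun q : ℝ × V => 𝐞 (-⟪v, q.2⟫) • u m q.1 v) (integrandFDeriv u m v p) p := by
  have h_char := (Real.hasDerivAt_fourierChar (-⟪v, p.2⟫)).hasFDerivAt.comp p
    ((innerSL ℝ v).comp (ContinuousLinearMap.snd ℝ ℝ V)).hasFDerivAt.neg
  have h_u := (hu.hasDerivAt m p.1 hp v).hasFDerivAt.comp p (hasFDerivAt_fst (𝕜 := ℝ))
  refine (h_char.smul h_u).congr_fderiv (ContinuousLinearMap.ext fun q => ?_)
  rw [integrandFDeriv_apply]
  simp only [add_apply, smul_apply, ContinuousLinearMap.smulRight_apply,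
    ContinuousLinearMap.comp_apply, neg_apply, innerSL_apply_apply, ContinuousLinearMap.coe_fst',
    ContinuousLinearMap.coe_snd', ContinuousLinearMap.toSpanSingleton_apply, Function.comp_apply,
    Pi.neg_apply, Circle.smul_def, ← Complex.coe_smul, smul_eq_mul]
  push_cast
  ring

lemma continuous_integrandFDeriv (hu : IsDecayingFlow u) (m : ℕ) {p : ℝ × V} (hp : 0 < p.1) :
    Continuous fun v => integrandFDeriv u m v p := by
  have h_m := hu.continuous m p.1 hp
  have h_succ := hu.continuous (m + 1) p.1 hp
  exact (((ContinuousLinearMap.smulRightL ℝ (ℝ × V) ℂ) _).continuous.comp (by fun_prop)).add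
    (((ContinuousLinearMap.smulRightL ℝ (ℝ × V) ℂ).continuous.comp (by fun_prop)).clm_apply
      (by fun_prop))

variable [FiniteDimensional ℝ V] [MeasurableSpace V] [BorelSpace V]

lemma exists_integrable_bound (hu : IsDecayingFlow u) (n m : ℕ) {a b : ℝ} (ha : 0 < a) :
    ∃ g : V → ℝ, Integrable g ∧ ∀ t ∈ Set.Icc a b, ∀ v, (1 + ‖v‖) ^ n * ‖u m t v‖ ≤ g v := by
  obtain ⟨C, hC⟩ := hu.exists_decay (Module.finrank ℝ V + 1 + n) m a b ha
  refine ⟨fun v => C * (1 + ‖v‖) ^ (-((Module.finrank ℝ V + 1 : ℕ) : ℝ)),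
    (integrable_one_add_norm (by simp)).const_mul C, fun t ht v => ?_⟩
  beta_reduce
  rw [Real.rpow_neg (by positivity), Real.rpow_natCast, ← div_eq_mul_inv,
    le_div_iff₀' (by positivity), ← mul_assoc, ← pow_add]
  exact hC t ht v

lemma integrable (hu : IsDecayingFlow u) (m : ℕ) {t : ℝ} (ht : 0 < t) : Integrable (u m t) := by
  obtain ⟨g, hg, h⟩ := hu.exists_integrable_bound 0 m (b := t) ht
  refine hg.mono' (hu.continuous m t ht).aestronglyMeasurable (.of_forall fun v => ?_)
  simpa only [pow_zero, one_mul] using h t ⟨le_rfl, le_rfl⟩ v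

lemma exists_bound_integrandFDeriv (hu : IsDecayingFlow u) (m : ℕ) {a b : ℝ} (ha : 0 < a) :
    ∃ g : V → ℝ, Integrable g ∧ ∀ p : ℝ × V, p.1 ∈ Set.Icc a b → ∀ v,
      ‖integrandFDeriv u m v p‖ ≤ g v := by
  obtain ⟨g₀, hg₀, h₀⟩ := hu.exists_integrable_bound 0 (m + 1) (b := b) ha
  obtain ⟨g₁, hg₁, h₁⟩ := hu.exists_integrable_bound 1 m (b := b) ha
  refine ⟨_, hg₀.add (hg₁.const_mul (2 * Real.pi)), fun p hp v =>
    (norm_integrandFDeriv_le m v p).trans (add_le_add ?_ ?_)⟩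
  · simpa only [pow_zero, one_mul] using h₀ p.1 hp v
  · refine mul_le_mul_of_nonneg_left (le_trans ?_ (h₁ p.1 hp v)) Real.two_pi_pos.le
    rw [pow_one]
    gcongr
    linarith

lemma aestronglyMeasurable_integrandFDeriv (hu : IsDecayingFlow u) (m : ℕ) {p : ℝ × V}
    (hp : 0 < p.1) : AEStronglyMeasurable fun v => integrandFDeriv u m v p :=
  (hu.continuous_integrandFDeriv m hp).comp_aestronglyMeasurable aestronglyMeasurable_id

lemma hasFDerivAt_fourier (hu : IsDecayingFlow u) (m : ℕ) {p : ℝ × V} (hp : 0 < p.1) :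
    HasFDerivAt (fun q : ℝ × V => 𝓕 (u m q.1) q.2) (∫ v, integrandFDeriv u m v p) p := by
  have h_half : 0 < p.1 / 2 := by linarith
  obtain ⟨g, hg, h⟩ := hu.exists_bound_integrandFDeriv m (b := 2 * p.1) h_half
  have h_nhds : (fun q : ℝ × V => q.1) ⁻¹' Set.Icc (p.1 / 2) (2 * p.1) ∈ 𝓝 p :=
    continuous_fst.continuousAt.preimage_mem_nhds (Icc_mem_nhds (by linarith) (by linarith))
  have h_integrable {q : ℝ × V} (hq : 0 < q.1) : Integrable fun v => 𝐞 (-⟪v, q.2⟫) • u m q.1 v :=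
    (Real.fourierIntegral_convergent_iff q.2).2 (hu.integrable m hq)
  exact hasFDerivAt_integral_of_dominated_of_fderiv_le (F' := fun q v => integrandFDeriv u m v q)
    h_nhds
    (mem_of_superset h_nhds fun q hq => (h_integrable (h_half.trans_le hq.1)).aestronglyMeasurable)
    (h_integrable hp) (hu.aestronglyMeasurable_integrandFDeriv m hp)
    (.of_forall fun v q hq => h q hq v) hg
    (.of_forall fun v q hq => hu.hasFDerivAt_integrand m v (h_half.trans_le hq.1))

lemma fderiv_fourier_apply (hu : IsDecayingFlow u) (m : ℕ) {p : ℝ × V}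
    (hp : 0 < p.1) (q : ℝ × V) :
    fderiv ℝ (fun q : ℝ × V => 𝓕 (u m q.1) q.2) p q = q.1 • 𝓕 (u (m + 1) p.1) p.2 +
      𝓕 (fun v => (-(2 * Real.pi * Complex.I) * ⟪v, q.2⟫) • u m p.1 v) p.2 := by
  rw [(hu.hasFDerivAt_fourier m hp).fderiv,
    ContinuousLinearMap.integral_apply]
  · simp only [integrandFDeriv_apply, Real.fourier_eq]
    rw [integral_add, integral_smul q.1]
    · exact ((Real.fourierIntegral_convergent_iff p.2).2 (hu.integrable (m + 1) hp)).smul q.1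
    · exact (Real.fourierIntegral_convergent_iff p.2).2 ((hu.inner_smul _ q.2).integrable m hp)
  · obtain ⟨g, hg, h⟩ := hu.exists_bound_integrandFDeriv m (b := p.1) hp
    exact hg.mono' (hu.aestronglyMeasurable_integrandFDeriv m hp)
      (.of_forall (h p ⟨le_rfl, le_rfl⟩))

lemma hasDerivAt_fourier (hu : IsDecayingFlow u) (m : ℕ) {t : ℝ} (ht : 0 < t) (w : V) :
    HasDerivAt (fun s => 𝓕 (u m s) w) (𝓕 (u (m + 1) t) w) t := by
  have h := (hu.hasFDerivAt_fourier m (p := (t, w)) ht).differentiableAt.hasFDerivAt.comp_hasDerivAt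
    t ((hasDerivAt_id t).prodMk (hasDerivAt_const t w))
  refine h.congr_deriv ?_
  rw [hu.fderiv_fourier_apply m (p := (t, w)) ht]
  simp only [one_smul, inner_zero_right, Complex.ofReal_zero, mul_zero, zero_smul]
  simp [Real.fourier_eq]

lemma contDiffOn_nat_fourier (n : ℕ) : ∀ {u : ℕ → ℝ → V → ℂ}, IsDecayingFlow u → ∀ m,
    ContDiffOn ℝ n (fun q : ℝ × V => 𝓕 (u m q.1) q.2) (Set.Ioi 0 ×ˢ Set.univ) := by
  induction n with
  | zero =>
    intro u hu m
    rw [Nat.cast_zero, contDiffOn_zero]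
    exact fun p hp => (hu.hasFDerivAt_fourier m hp.1).continuousAt.continuousWithinAt
  | succ n ih =>
    intro u hu m
    rw [Nat.cast_succ, contDiffOn_succ_iff_fderiv_of_isOpen (isOpen_Ioi.prod isOpen_univ)]
    refine ⟨fun p hp =>
      (hu.hasFDerivAt_fourier m hp.1).differentiableAt.differentiableWithinAt, by simp, ?_⟩
    refine contDiffOn_clm_apply.2 fun q => ContDiffOn.congr ?_ fun p hp =>
      hu.fderiv_fourier_apply m hp.1 q
    exact ((ih hu (m + 1)).const_smul q.1).add (ih (hu.inner_smul _ q.2) m)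

lemma contDiffOn_fourier (hu : IsDecayingFlow u) (m : ℕ) :
    ContDiffOn ℝ ∞ (fun q : ℝ × V => 𝓕 (u m q.1) q.2) (Set.Ioi 0 ×ˢ Set.univ) :=
  contDiffOn_infty.2 fun n => contDiffOn_nat_fourier n hu m

end IsDecayingFlow

end FourierFlow

section LocalizedFourier

open scoped FourierTransform

variable {d : ℕ} {σ : ℝ} {L : ℝ^d → ℝ} {θ : ℝ^d → ℂ} {y : ℕ → ℝ → Lp ℂ 2 (gibbs σ L)}

/-- The plane wave `x ↦ e^{-2πi⟨x, ξ⟩}`. -/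
noncomputable def planeWave (ξ x : ℝ^d) : ℂ := 𝐞 (-⟪x, ξ⟫)

lemma norm_planeWave (ξ x : ℝ^d) : ‖planeWave ξ x‖ = 1 := Circle.norm_coe _

lemma contDiff_planeWave (ξ : ℝ^d) : ContDiff ℝ ∞ (planeWave ξ) := by
  change ContDiff ℝ ∞ fun x => Complex.exp (((2 * Real.pi * -⟪x, ξ⟫ : ℝ) : ℂ) * Complex.I)
  exact ((Complex.ofRealCLM.contDiff.comp
    (contDiff_const.mul (contDiff_id.inner ℝ contDiff_const).neg)).mul contDiff_const).cexp

lemma pderiv_planeWave (ξ : ℝ^d) (i : Fin d) :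
    pderiv i (planeWave ξ) = fun x => -(2 * Real.pi * Complex.I * ξ i) * planeWave ξ x := by
  ext x
  have h : pderiv i (planeWave ξ) x = -2 * Real.pi * Complex.I *
      ⟪EuclideanSpace.single i (1 : ℝ), ξ⟫ * planeWave ξ x :=
    Real.fderiv_fourierChar_neg_bilinear_left_apply (innerSL ℝ) x _ ξ
  rw [h, EuclideanSpace.inner_single_left, map_one, one_mul]
  ring

lemma langevin_planeWave (ξ x : ℝ^d) : langevin σ L (planeWave ξ) x =
    (∑ i, 2 * Real.pi * Complex.I * ξ i * pderiv i L x - 4 * Real.pi ^ 2 * σ * ‖ξ‖ ^ 2) *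
      planeWave ξ x := by
  have h_snd i : pderiv i (pderiv i (planeWave ξ)) x =
      -(4 * Real.pi ^ 2 * (ξ i : ℂ) ^ 2) * planeWave ξ x := by
    have h := congrFun (pderiv_clm_apply (-(2 * Real.pi * Complex.I * ξ i) •
      ContinuousLinearMap.id ℝ ℂ) ((contDiff_planeWave ξ).differentiable (by simp)) i) x
    simp only [smul_apply, ContinuousLinearMap.id_apply, smul_eq_mul] at h
    rw [pderiv_planeWave, h, pderiv_planeWave]
    linear_combination (4 * Real.pi ^ 2 * (ξ i : ℂ) ^ 2 * planeWave ξ x) * Complex.I_sq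
  have h_norm : (‖ξ‖ : ℂ) ^ 2 = ∑ i, (ξ i : ℂ) ^ 2 := by
    rw [← Complex.ofReal_pow, EuclideanSpace.real_norm_sq_eq]
    push_cast
    rfl
  rw [h_norm, Finset.mul_sum, ← Finset.sum_sub_distrib, Finset.sum_mul]
  refine Finset.sum_congr rfl fun i _ => ?_
  rw [h_snd, pderiv_planeWave, Complex.real_smul, Complex.real_smul]
  ring

/-- The commutator `[𝔏, xᵢ] = 2σ∂ᵢ - ∂ᵢL`. -/
noncomputable def langevinCommutator (σ : ℝ) (L : ℝ^d → ℝ) (i : Fin d) (θ : ℝ^d → ℂ) (x : ℝ^d) :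
    ℂ :=
  2 * σ * pderiv i θ x - pderiv i L x • θ x

lemma langevinCommutator_mem_testFunctions (hL : ContDiff ℝ ∞ L) (hθ : θ ∈ testFunctions d)
    (i : Fin d) : langevinCommutator σ L i θ ∈ testFunctions d :=
  sub_mem (Submodule.smul_mem _ (2 * σ : ℂ) (pderiv_mem_testFunctions hθ i))
    (real_smul_mem_testFunctions (contDiff_pderiv hL i) hθ)

lemma langevin_mul_planeWave (hθ : ContDiff ℝ ∞ θ) (ξ x : ℝ^d) :
    langevin σ L (θ * planeWave ξ) x = langevin σ L θ x * planeWave ξ x -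
      4 * Real.pi ^ 2 * σ * ‖ξ‖ ^ 2 * (θ x * planeWave ξ x) -
      ∑ i, 2 * Real.pi * Complex.I * ξ i * (langevinCommutator σ L i θ x * planeWave ξ x) := by
  have h_sum : ∑ i, 2 * Real.pi * Complex.I * ξ i * (langevinCommutator σ L i θ x * planeWave ξ x) =
      -(2 * σ * ∑ i, pderiv i θ x * pderiv i (planeWave ξ) x) -
        θ x * (∑ i, 2 * Real.pi * Complex.I * ξ i * pderiv i L x) * planeWave ξ x := by
    simp only [Finset.mul_sum, Finset.sum_mul, ← Finset.sum_neg_distrib, ← Finset.sum_sub_distrib]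
    refine Finset.sum_congr rfl fun i _ => ?_
    rw [pderiv_planeWave, langevinCommutator, Complex.real_smul]
    ring
  rw [langevin_mul hθ (contDiff_planeWave ξ), langevin_planeWave, h_sum]
  ring

/-- The Fourier transform of `θ f π`, where `π = e^{-L/σ}`. -/
noncomputable def localFourier (θ : ℝ^d → ℂ) (f : Lp ℂ 2 (gibbs σ L)) (ξ : ℝ^d) : ℂ :=
  ∫ x, θ x * planeWave ξ x * f x ∂gibbs σ L

lemma mul_planeWave_mem_testFunctions (hθ : θ ∈ testFunctions d) (ξ : ℝ^d) :
    θ * planeWave ξ ∈ testFunctions d :=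
  mul_mem_testFunctions hθ.1 (contDiff_planeWave ξ) (.inl hθ.2)

variable [Fact (ContDiff ℝ ∞ L)]

lemma integrable_testFunction_mul (hθ : θ ∈ testFunctions d) (f : Lp ℂ 2 (gibbs σ L)) :
    Integrable (fun x => θ x * f x) (gibbs σ L) :=
  (memLp_of_mem_testFunctions _ hθ).integrable_mul (Lp.memLp f)

lemma integrable_gibbs_smul (hθ : θ ∈ testFunctions d) (f : Lp ℂ 2 (gibbs σ L)) :
    Integrable fun x => Real.exp (-L x / σ) • (θ x * f x) := by
  have hL : ContDiff ℝ ∞ L := Fact.out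
  have h := integrable_testFunction_mul hθ f
  replace h := (integrable_withDensity_iff_integrable_smul'
    (measurable_ofReal_exp_neg_div σ hL.continuous.measurable)
    (.of_forall fun _ => ENNReal.ofReal_lt_top)).1 h
  simpa only [ENNReal.toReal_ofReal (Real.exp_nonneg _)] using h

lemma localFourier_eq_fourier (θ : ℝ^d → ℂ) (f : Lp ℂ 2 (gibbs σ L)) :
    localFourier θ f = 𝓕 fun x => Real.exp (-L x / σ) • (θ x * f x) := by
  ext ξ
  rw [localFourier, integral_gibbs σ (Fact.out : ContDiff ℝ ∞ L).continuous.measurable,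
    Real.fourier_eq]
  refine integral_congr_ae (.of_forall fun x => ?_)
  simp only [planeWave, Circle.smul_def, Complex.real_smul, smul_eq_mul]
  ring

lemma continuous_localFourier (hθ : θ ∈ testFunctions d) (f : Lp ℂ 2 (gibbs σ L)) :
    Continuous (localFourier θ f) := by
  rw [localFourier_eq_fourier]
  exact VectorFourier.fourierIntegral_continuous Real.continuous_fourierChar continuous_inner
    (integrable_gibbs_smul hθ f)

lemma norm_localFourier_le (hθ : θ ∈ testFunctions d) (f : Lp ℂ 2 (gibbs σ L)) (ξ : ℝ^d) :
    ‖localFourier θ f ξ‖ ≤ ‖testToLp (gibbs σ L) ⟨θ, hθ⟩‖ * ‖f‖ := by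
  have h := integral_mul_eq_inner_testToLp (gibbs σ L) (mul_planeWave_mem_testFunctions hθ ξ) f
  rw [localFourier]
  simp only [Pi.mul_apply] at h
  rw [h]
  refine (norm_inner_le_norm _ _).trans ?_
  gcongr
  refine Lp.norm_le_norm_of_ae_le ?_
  filter_upwards [coeFn_testToLp (gibbs σ L) ⟨θ, hθ⟩, coeFn_testToLp (gibbs σ L)
    ⟨_, star_mem_testFunctions (mul_planeWave_mem_testFunctions hθ ξ)⟩] with x hx hx'
  rw [hx, hx', Pi.star_apply, norm_star, Pi.mul_apply, norm_mul, norm_planeWave, mul_one]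

lemma hasDerivAt_localFourier (hy : IsWeakFlow σ L y) (hθ : θ ∈ testFunctions d) (m : ℕ) {t : ℝ}
    (ht : 0 < t) (ξ : ℝ^d) :
    HasDerivAt (fun s => localFourier θ (y m s) ξ) (localFourier θ (y (m + 1) t) ξ) t := by
  have h f : localFourier θ f ξ = inner ℂ (testToLp (gibbs σ L) _) f :=
    integral_mul_eq_inner_testToLp (gibbs σ L) (mul_planeWave_mem_testFunctions hθ ξ) f
  simp only [h]
  exact ((innerSL ℂ _).restrictScalars ℝ).hasFDerivAt.comp_hasDerivAt t (hy.hasDerivAt m t ht)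

/-- The weak equation tested with `θ e^{-2πi⟨·, ξ⟩}` gains one power of `‖ξ‖`. -/
lemma norm_sq_mul_localFourier (hy : IsWeakFlow σ L y) (hθ : θ ∈ testFunctions d) (m : ℕ) {t : ℝ}
    (ht : 0 < t) (ξ : ℝ^d) : 4 * Real.pi ^ 2 * σ * ‖ξ‖ ^ 2 * localFourier θ (y m t) ξ =
      localFourier (langevin σ L θ) (y m t) ξ - localFourier θ (y (m + 1) t) ξ -
        ∑ i, 2 * Real.pi * Complex.I * ξ i *
          localFourier (langevinCommutator σ L i θ) (y m t) ξ := by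
  have hL : ContDiff ℝ ∞ L := Fact.out
  have h_int {φ : ℝ^d → ℂ} (hφ : φ ∈ testFunctions d) (c : ℂ) :
      Integrable (fun x => c * (φ x * planeWave ξ x * y m t x)) (gibbs σ L) :=
    (integrable_testFunction_mul (mul_planeWave_mem_testFunctions hφ ξ) (y m t)).const_mul c
  have h_comm i := h_int (langevinCommutator_mem_testFunctions (σ := σ) hL hθ i)
    (2 * Real.pi * Complex.I * ξ i)
  have h_langevin : Integrable (fun x => langevin σ L θ x * planeWave ξ x * y m t x) (gibbs σ L) :=
    integrable_testFunction_mul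
      (mul_planeWave_mem_testFunctions (langevin_mem_testFunctions hL hθ) ξ) (y m t)
  have h_eq := hy.integral_mul_succ _ (mul_planeWave_mem_testFunctions hθ ξ) m t ht
  have h_expand x : langevin σ L (θ * planeWave ξ) x * y m t x =
      langevin σ L θ x * planeWave ξ x * y m t x -
        4 * Real.pi ^ 2 * σ * ‖ξ‖ ^ 2 * (θ x * planeWave ξ x * y m t x) -
        ∑ i, 2 * Real.pi * Complex.I * ξ i *
          (langevinCommutator σ L i θ x * planeWave ξ x * y m t x) := by
    rw [langevin_mul_planeWave hθ.1, sub_mul, sub_mul, Finset.sum_mul]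
    simp only [mul_assoc]
  have h_main : Integrable (fun x => langevin σ L θ x * planeWave ξ x * y m t x -
      4 * Real.pi ^ 2 * σ * ‖ξ‖ ^ 2 * (θ x * planeWave ξ x * y m t x)) (gibbs σ L) :=
    h_langevin.sub (h_int hθ _)
  simp only [h_expand] at h_eq
  rw [integral_sub h_main (integrable_finsetSum _ fun i _ => h_comm i),
    integral_sub h_langevin (h_int hθ _), integral_finsetSum _ fun i _ => h_comm i] at h_eq
  simp only [integral_const_mul] at h_eq
  change localFourier θ (y (m + 1) t) ξ = localFourier (langevin σ L θ) (y m t) ξ -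
    4 * Real.pi ^ 2 * σ * ‖ξ‖ ^ 2 * localFourier θ (y m t) ξ -
    ∑ i, 2 * Real.pi * Complex.I * ξ i * localFourier (langevinCommutator σ L i θ) (y m t) ξ at h_eq
  linear_combination h_eq

lemma one_add_mul_le_of_mul_sq_mul_le {K r a b c : ℝ} (hK : 0 < K) (hr : 0 ≤ r) (ha : 0 ≤ a)
    (hb : 0 ≤ b) (hc : 0 ≤ c) (h : K * r ^ 2 * a ≤ b + r * c) :
    (1 + r) * a ≤ (2 + 2 / K) * (a + b + c) := by
  have h_sq : r ^ 2 * a ≤ (b + r * c) / K := by rw [le_div_iff₀ hK]; linarith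
  have h_one : b + r * c ≤ (1 + r) * (a + b + c) := by
    nlinarith [mul_nonneg hr ha, mul_nonneg hr hb]
  refine le_of_mul_le_mul_left ?_ (by positivity : 0 < 1 + r)
  calc (1 + r) * ((1 + r) * a) ≤ 2 * a + 2 * (r ^ 2 * a) := by
        nlinarith [mul_nonneg (sq_nonneg (1 - r)) ha]
    _ ≤ 2 * ((1 + r) * (a + b + c)) + 2 * ((1 + r) * (a + b + c) / K) := by
        have h_two : a ≤ (1 + r) * (a + b + c) := by
          nlinarith [mul_nonneg hr ha, mul_nonneg hr hb, mul_nonneg hr hc]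
        gcongr
        exact h_sq.trans (by gcongr)
    _ = (1 + r) * ((2 + 2 / K) * (a + b + c)) := by ring

/-- One bootstrap step: the right-hand side involves only other localized transforms of `y`. -/
lemma one_add_norm_mul_norm_localFourier_le (hσ : 0 < σ) (hy : IsWeakFlow σ L y)
    (hθ : θ ∈ testFunctions d) (m : ℕ) {t : ℝ} (ht : 0 < t) (ξ : ℝ^d) :
    (1 + ‖ξ‖) * ‖localFourier θ (y m t) ξ‖ ≤ (2 + 2 / (4 * Real.pi ^ 2 * σ)) *
      (‖localFourier θ (y m t) ξ‖ +
        (‖localFourier (langevin σ L θ) (y m t) ξ‖ + ‖localFourier θ (y (m + 1) t) ξ‖) +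
        2 * Real.pi * ∑ i, ‖localFourier (langevinCommutator σ L i θ) (y m t) ξ‖) := by
  have := Real.pi_pos
  have h_sum : ‖∑ i, 2 * Real.pi * Complex.I * ξ i *
      localFourier (langevinCommutator σ L i θ) (y m t) ξ‖ ≤ 2 * Real.pi * ‖ξ‖ *
        ∑ i, ‖localFourier (langevinCommutator σ L i θ) (y m t) ξ‖ := by
    rw [Finset.mul_sum]
    refine norm_sum_le_of_le _ fun i _ => ?_
    simp only [norm_mul, Complex.norm_I, Complex.norm_real, Complex.norm_ofNat, mul_one]
    rw [Real.norm_of_nonneg Real.pi_pos.le]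
    gcongr
    exact PiLp.norm_apply_le ξ i
  have h_main := congrArg norm (norm_sq_mul_localFourier hy hθ m ht ξ)
  replace h_main := h_main.trans_le (norm_sub_le_of_le (norm_sub_le _ _) h_sum)
  simp only [norm_mul, norm_pow, Complex.norm_real, Complex.norm_ofNat, norm_norm,
    Real.norm_of_nonneg Real.pi_pos.le, Real.norm_of_nonneg hσ.le] at h_main
  exact one_add_mul_le_of_mul_sq_mul_le (by positivity) (norm_nonneg ξ) (norm_nonneg _)
    (by positivity) (by positivity) (h_main.trans_eq (by ring))

lemma exists_norm_localFourier_le (hy : IsWeakFlow σ L y) (hθ : θ ∈ testFunctions d) {a : ℝ}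
    (ha : 0 < a) (b : ℝ) (m : ℕ) :
    ∃ C, ∀ t ∈ Set.Icc a b, ∀ ξ, ‖localFourier θ (y m t) ξ‖ ≤ C := by
  have h_cont : ContinuousOn (y m) (Set.Icc a b) := fun t ht =>
    (hy.hasDerivAt m t (ha.trans_le ht.1)).continuousAt.continuousWithinAt
  obtain ⟨C, hC⟩ := isCompact_Icc.exists_bound_of_continuousOn h_cont
  exact ⟨‖testToLp (gibbs σ L) ⟨θ, hθ⟩‖ * C, fun t ht ξ =>
    (norm_localFourier_le hθ _ ξ).trans (by gcongr; exact hC t ht)⟩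

lemma exists_decay_localFourier (hσ : 0 < σ) (hy : IsWeakFlow σ L y) {a : ℝ} (ha : 0 < a) (b : ℝ)
    (n : ℕ) : ∀ θ ∈ testFunctions d, ∀ m, ∃ C, ∀ t ∈ Set.Icc a b, ∀ ξ,
      (1 + ‖ξ‖) ^ n * ‖localFourier θ (y m t) ξ‖ ≤ C := by
  have hL : ContDiff ℝ ∞ L := Fact.out
  induction n with
  | zero => simpa only [pow_zero, one_mul] using fun θ hθ => exists_norm_localFourier_le hy hθ ha b
  | succ n ih =>
    intro θ hθ m
    obtain ⟨C₁, h₁⟩ := ih θ hθ m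
    obtain ⟨C₂, h₂⟩ := ih _ (langevin_mem_testFunctions (σ := σ) hL hθ) m
    obtain ⟨C₃, h₃⟩ := ih θ hθ (m + 1)
    choose C₄ h₄ using fun i => ih _ (langevinCommutator_mem_testFunctions (σ := σ) hL hθ i) m
    refine ⟨(2 + 2 / (4 * Real.pi ^ 2 * σ)) * (C₁ + (C₂ + C₃) + 2 * Real.pi * ∑ i, C₄ i),
      fun t ht ξ => ?_⟩
    calc (1 + ‖ξ‖) ^ (n + 1) * ‖localFourier θ (y m t) ξ‖
        = (1 + ‖ξ‖) ^ n * ((1 + ‖ξ‖) * ‖localFourier θ (y m t) ξ‖) := by ring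
      _ ≤ (1 + ‖ξ‖) ^ n * ((2 + 2 / (4 * Real.pi ^ 2 * σ)) * (‖localFourier θ (y m t) ξ‖ +
            (‖localFourier (langevin σ L θ) (y m t) ξ‖ + ‖localFourier θ (y (m + 1) t) ξ‖) +
            2 * Real.pi * ∑ i, ‖localFourier (langevinCommutator σ L i θ) (y m t) ξ‖)) := by
          gcongr (1 + ‖ξ‖) ^ n * ?_
          exact one_add_norm_mul_norm_localFourier_le hσ hy hθ m (ha.trans_le ht.1) ξ
      _ = (2 + 2 / (4 * Real.pi ^ 2 * σ)) * ((1 + ‖ξ‖) ^ n * ‖localFourier θ (y m t) ξ‖ +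
            ((1 + ‖ξ‖) ^ n * ‖localFourier (langevin σ L θ) (y m t) ξ‖ +
              (1 + ‖ξ‖) ^ n * ‖localFourier θ (y (m + 1) t) ξ‖) + 2 * Real.pi *
            ∑ i, (1 + ‖ξ‖) ^ n * ‖localFourier (langevinCommutator σ L i θ) (y m t) ξ‖) := by
          rw [← Finset.mul_sum]
          ring
      _ ≤ (2 + 2 / (4 * Real.pi ^ 2 * σ)) *
            (C₁ + (C₂ + C₃) + 2 * Real.pi * ∑ i, C₄ i) := by
          have := Real.pi_pos
          gcongr
          · exact h₁ t ht ξ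
          · exact h₂ t ht ξ
          · exact h₃ t ht ξ
          · exact h₄ _ t ht ξ

lemma isDecayingFlow_localFourier (hσ : 0 < σ) (hy : IsWeakFlow σ L y) (hθ : θ ∈ testFunctions d) :
    IsDecayingFlow fun m t => localFourier θ (y m t) where
  continuous m _ _ := continuous_localFourier hθ (y m _)
  hasDerivAt m _ ht ξ := hasDerivAt_localFourier hy hθ m ht ξ
  exists_decay n m _ b ha := exists_decay_localFourier hσ hy ha b n θ hθ m

lemma fourierInv_localFourier_ae_eq (hσ : 0 < σ) (hy : IsWeakFlow σ L y)
    (hθ : θ ∈ testFunctions d) (m : ℕ) {t : ℝ} (ht : 0 < t) :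
    𝓕⁻ (localFourier θ (y m t)) =ᵐ[volume] fun x => Real.exp (-L x / σ) • (θ x * y m t x) := by
  have h_int := (isDecayingFlow_localFourier hσ hy hθ).integrable m ht
  rw [localFourier_eq_fourier] at h_int ⊢
  exact fourierInv_fourier_ae_eq (integrable_gibbs_smul hθ (y m t)) h_int

end LocalizedFourier

section SmoothRepresentative

open scoped FourierTransform

variable {d : ℕ} {σ : ℝ} {L : ℝ^d → ℝ} {y : ℕ → ℝ → Lp ℂ 2 (gibbs σ L)}

/-- A smooth cutoff function equal to `1` on the ball of radius `R`. -/
noncomputable def cutoff (d : ℕ) (R : ℝ) : ContDiffBump (0 : ℝ^d) where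
  rIn := max R 1
  rOut := max R 1 + 1
  rIn_pos := by positivity
  rIn_lt_rOut := by linarith

/-- The test function `χ / π` with `χ` a cutoff function and `π = e^{-L/σ}`; dividing by `π` makes
the inverse of `localFourier` return `χ f` rather than `χ f π`. -/
noncomputable def gibbsCutoff (σ : ℝ) (L : ℝ^d → ℝ) (R : ℝ) (x : ℝ^d) : ℂ :=
  Real.exp (L x / σ) • (cutoff d R x : ℂ)

lemma gibbsCutoff_mem_testFunctions (σ : ℝ) (hL : ContDiff ℝ ∞ L) (R : ℝ) :
    gibbsCutoff σ L R ∈ testFunctions d :=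
  real_smul_mem_testFunctions (hL.div_const σ).exp
    ⟨Complex.ofRealCLM.contDiff.comp (cutoff d R).contDiff,
      (cutoff d R).hasCompactSupport.comp_left (g := Complex.ofReal) Complex.ofReal_zero⟩

lemma exp_smul_gibbsCutoff_mul {R : ℝ} {x : ℝ^d} (hx : ‖x‖ ≤ R) (z : ℂ) :
    Real.exp (-L x / σ) • (gibbsCutoff σ L R x * z) = z := by
  have h_one : cutoff d R x = 1 := (cutoff d R).one_of_mem_closedBall
    (mem_closedBall_zero_iff.2 (hx.trans (le_max_left R 1)))
  rw [gibbsCutoff, h_one, Complex.ofReal_one, smul_mul_assoc, smul_smul, ← Real.exp_add, neg_div,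
    neg_add_cancel, Real.exp_zero, one_smul, one_mul]

/-- The smooth representative of a regular `f ∈ L²(π)`, obtained by Fourier inversion of `χ f` for a
cutoff function `χ` equal to `1` near the point of evaluation. -/
noncomputable def smoothRep (f : Lp ℂ 2 (gibbs σ L)) (x : ℝ^d) : ℂ :=
  𝓕⁻ (localFourier (gibbsCutoff σ L (‖x‖ + 1)) f) x

variable [Fact (ContDiff ℝ ∞ L)]

lemma contDiffOn_fourierInv_localFourier (hσ : 0 < σ) (hy : IsWeakFlow σ L y) {θ : ℝ^d → ℂ}
    (hθ : θ ∈ testFunctions d) (m : ℕ) :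
    ContDiffOn ℝ ∞ (fun p : ℝ × ℝ^d => 𝓕⁻ (localFourier θ (y m p.1)) p.2)
      (Set.Ioi 0 ×ˢ Set.univ) := by
  simp only [Real.fourierInv_eq_fourier_neg]
  exact ((isDecayingFlow_localFourier hσ hy hθ).contDiffOn_fourier m).comp
    (f := fun p : ℝ × ℝ^d => (p.1, -p.2)) (contDiff_fst.prodMk contDiff_snd.neg).contDiffOn
    fun p hp => ⟨hp.1, trivial⟩

lemma smoothRep_eq (hσ : 0 < σ) (hy : IsWeakFlow σ L y) (m : ℕ) {t : ℝ} (ht : 0 < t) {R : ℝ}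
    {x : ℝ^d} (hx : ‖x‖ < R) :
    smoothRep (y m t) x = 𝓕⁻ (localFourier (gibbsCutoff σ L R) (y m t)) x := by
  have hL : ContDiff ℝ ∞ L := Fact.out
  have h_cont S : Continuous (𝓕⁻ (localFourier (gibbsCutoff σ L S) (y m t))) :=
    contDiffOn_univ.1 ((contDiffOn_fourierInv_localFourier hσ hy
      (gibbsCutoff_mem_testFunctions σ hL S) m).comp (f := fun x : ℝ^d => (t, x))
      (contDiff_prodMk_right t).contDiffOn fun x _ => ⟨ht, trivial⟩) |>.continuous
  have h_ae S : ∀ᵐ z, ‖z‖ < S →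
      𝓕⁻ (localFourier (gibbsCutoff σ L S) (y m t)) z = y m t z := by
    filter_upwards [fourierInv_localFourier_ae_eq hσ hy (gibbsCutoff_mem_testFunctions σ hL S) m ht]
      with z hz hzS
    rw [hz, exp_smul_gibbsCutoff_mul hzS.le]
  have hU : IsOpen {z : ℝ^d | ‖z‖ < min (‖x‖ + 1) R} := isOpen_lt continuous_norm continuous_const
  refine Measure.eqOn_open_of_ae_eq (μ := volume) ?_ hU (h_cont (‖x‖ + 1)).continuousOn
    (h_cont R).continuousOn (lt_min (lt_add_one _) hx)
  rw [EventuallyEq, ae_restrict_iff' hU.measurableSet]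
  filter_upwards [h_ae (‖x‖ + 1), h_ae R] with z h₁ h₂ hz
  rw [h₁ (hz.trans_le (min_le_left _ _)), h₂ (hz.trans_le (min_le_right _ _))]

lemma contDiffOn_smoothRep (hσ : 0 < σ) (hy : IsWeakFlow σ L y) (m : ℕ) :
    ContDiffOn ℝ ∞ (fun p : ℝ × ℝ^d => smoothRep (y m p.1) p.2) (Set.Ioi 0 ×ˢ Set.univ) := by
  intro p hp
  have h_smooth := (contDiffOn_fourierInv_localFourier hσ hy
    (gibbsCutoff_mem_testFunctions σ (Fact.out : ContDiff ℝ ∞ L) (‖p.2‖ + 1)) m).contDiffAt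
    ((isOpen_Ioi.prod isOpen_univ).mem_nhds hp)
  refine (h_smooth.congr_of_eventuallyEq ?_).contDiffWithinAt
  have hU : IsOpen {q : ℝ × ℝ^d | 0 < q.1 ∧ ‖q.2‖ < ‖p.2‖ + 1} :=
    (isOpen_lt continuous_const continuous_fst).inter
      (isOpen_lt continuous_snd.norm continuous_const)
  filter_upwards [hU.mem_nhds ⟨hp.1, lt_add_one _⟩] with q hq
  exact smoothRep_eq hσ hy m hq.1 hq.2

lemma contDiff_smoothRep (hσ : 0 < σ) (hy : IsWeakFlow σ L y) (m : ℕ) {t : ℝ} (ht : 0 < t) :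
    ContDiff ℝ ∞ (smoothRep (y m t)) :=
  contDiffOn_univ.1 ((contDiffOn_smoothRep hσ hy m).comp (f := fun x : ℝ^d => (t, x))
    (contDiff_prodMk_right t).contDiffOn fun _ _ => ⟨ht, trivial⟩)

lemma smoothRep_ae_eq (hσ : 0 < σ) (hy : IsWeakFlow σ L y) (m : ℕ) {t : ℝ} (ht : 0 < t) :
    y m t =ᵐ[gibbs σ L] smoothRep (y m t) := by
  have hL : ContDiff ℝ ∞ L := Fact.out
  rw [EventuallyEq, ae_gibbs σ hL.continuous.measurable]
  filter_upwards [ae_all_iff.2 fun n : ℕ => fourierInv_localFourier_ae_eq hσ hy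
    (gibbsCutoff_mem_testFunctions σ hL n) m ht] with x hx
  obtain ⟨n, hn⟩ := exists_nat_gt ‖x‖
  rw [smoothRep_eq hσ hy m ht hn, hx n, exp_smul_gibbsCutoff_mul hn.le]

lemma hasDerivAt_smoothRep (hσ : 0 < σ) (hy : IsWeakFlow σ L y) (m : ℕ) {t : ℝ} (ht : 0 < t)
    (x : ℝ^d) : HasDerivAt (fun s => smoothRep (y m s) x) (smoothRep (y (m + 1) t) x) t := by
  simp only [smoothRep, Real.fourierInv_eq_fourier_neg]
  have h_cutoff := gibbsCutoff_mem_testFunctions σ (Fact.out : ContDiff ℝ ∞ L) (‖x‖ + 1)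
  exact (isDecayingFlow_localFourier hσ hy h_cutoff).hasDerivAt_fourier m ht (-x)

lemma langevin_smoothRep (hσ : 0 < σ) (hy : IsWeakFlow σ L y) (m : ℕ) {t : ℝ} (ht : 0 < t) :
    langevin σ L (smoothRep (y m t)) = smoothRep (y (m + 1) t) := by
  have h_smooth := contDiff_smoothRep hσ hy m ht
  have h_left := (contDiff_langevin (σ := σ) (Fact.out : ContDiff ℝ ∞ L) h_smooth).continuous
  have h_right := (contDiff_smoothRep hσ hy (m + 1) ht).continuous
  refine (Continuous.ae_eq_iff_eq (gibbs σ L) h_left h_right).1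
    (ae_eq_of_integral_testFunctions _ h_left.locallyIntegrable h_right.locallyIntegrable
      fun ψ hψ => ?_)
  rw [integral_mul_langevin_comm hσ.ne' hψ.1 h_smooth (.inl hψ.2)]
  have h_weak := hy.integral_mul_succ ψ hψ m t ht
  rw [integral_congr_ae ((smoothRep_ae_eq hσ hy (m + 1) ht).mono fun x hx => congrArg (_ * ·) hx),
    integral_congr_ae ((smoothRep_ae_eq hσ hy m ht).mono fun x hx => congrArg (_ * ·) hx)] at h_weak
  exact h_weak.symm

end SmoothRepresentative

section EnergyEstimate

lemma exists_mem_fst_eq_heatFlow {H G : Type*} [NormedAddCommGroup H] [InnerProductSpace ℂ H]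
    [CompleteSpace H] [NormedAddCommGroup G] [InnerProductSpace ℂ G] [CompleteSpace G]
    (K : Submodule ℂ (WithLp 2 (H × G))) [K.HasOrthogonalProjection] (m : ℕ) {t : ℝ} (ht : 0 < t)
    (f : H) : ∃ k ∈ K, k.fst = heatFlow (formResolvent K) m t f ∧
      ‖k.snd‖ ^ 2 ≤ ((2 * m + 1) / (2 * t)) ^ (2 * m + 1) * ‖f‖ ^ 2 := by
  have hsp := spectrum_formResolvent_subset K
  set y₀ := heatFlow (formResolvent K) m t f
  set y₁ := heatFlow (formResolvent K) (m + 1) t f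
  have h_fst : formResolvent K (y₀ - y₁) = y₀ := DFunLike.congr_fun
    (mul_heatFlow_sub_heatFlow_succ (isSelfAdjoint_formResolvent K) hsp m ht) f
  refine ⟨formLift K (y₀ - y₁), formLift_mem K _, h_fst, ?_⟩
  have h_energy := inner_snd_formLift (y₀ - y₁) (formLift_mem K (y₀ - y₁))
  rw [fst_formLift, h_fst, sub_sub_cancel_left, inner_neg_left] at h_energy
  calc ‖(formLift K (y₀ - y₁)).snd‖ ^ 2
      = ‖inner ℂ (formLift K (y₀ - y₁)).snd (formLift K (y₀ - y₁)).snd‖ := by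
        rw [inner_self_eq_norm_sq_to_K, norm_pow, RCLike.norm_ofReal, abs_norm]
    _ = ‖inner ℂ y₀ y₁‖ := by rw [h_energy, norm_neg, norm_inner_symm]
    _ ≤ _ := norm_inner_heatFlow_heatFlow_succ_le hsp m ht f

variable {α E : Type*} [MeasurableSpace α] {μ : Measure α} [NormedAddCommGroup E]

lemma lintegral_ofReal_norm_sq (f : Lp E 2 μ) :
    ∫⁻ x, ENNReal.ofReal (‖f x‖ ^ 2) ∂μ = ENNReal.ofReal (‖f‖ ^ 2) := by
  have h := eLpNorm_nnreal_pow_eq_lintegral (μ := μ) (f := f) (p := 2) two_ne_zero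
  simp only [NNReal.coe_ofNat, ENNReal.rpow_ofNat, ENNReal.coe_ofNat] at h
  simp only [ENNReal.ofReal_pow (norm_nonneg _), ofReal_norm, Lp.enorm_def, h]

lemma integral_norm_sq (f : Lp E 2 μ) : ∫ x, ‖f x‖ ^ 2 ∂μ = ‖f‖ ^ 2 := by
  have h_meas : AEStronglyMeasurable (fun x => ‖f x‖ ^ 2) μ :=
    (Lp.aestronglyMeasurable f).norm.pow 2
  rw [integral_eq_lintegral_of_nonneg_ae (.of_forall fun x => by positivity) h_meas,
    lintegral_ofReal_norm_sq, ENNReal.toReal_ofReal (by positivity)]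

end EnergyEstimate

section InitialDatum

variable {d : ℕ} {σ : ℝ} {L : ℝ^d → ℝ} {φ₀ : ℝ^d → ℝ}

lemma memLp_ofReal_gibbs (hL : Measurable L) (hφ₀ : AEStronglyMeasurable φ₀)
    (h_sq : Integrable fun x => φ₀ x ^ 2 * Real.exp (-L x / σ)) :
    MemLp (fun x => (φ₀ x : ℂ)) 2 (gibbs σ L) := by
  have h_meas : AEStronglyMeasurable (fun x => (φ₀ x : ℂ)) (gibbs σ L) :=
    (Complex.continuous_ofReal.comp_aestronglyMeasurable hφ₀).mono_ac
      (withDensity_absolutelyContinuous _ _)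
  rw [memLp_two_iff_integrable_sq_norm h_meas, gibbs,
    integrable_withDensity_iff (measurable_ofReal_exp_neg_div σ hL)
      (.of_forall fun _ => ENNReal.ofReal_lt_top)]
  simpa only [ENNReal.toReal_ofReal (Real.exp_nonneg _), Complex.norm_real, Real.norm_eq_abs,
    sq_abs] using h_sq

lemma norm_toLp_ofReal_gibbs (hL : Measurable L)
    (hφ₀ : MemLp (fun x => (φ₀ x : ℂ)) 2 (gibbs σ L)) :
    ‖hφ₀.toLp‖ ^ 2 = ∫ x, φ₀ x ^ 2 * Real.exp (-L x / σ) := by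
  rw [← integral_norm_sq, integral_congr_ae (hφ₀.coeFn_toLp.mono fun x hx =>
    congrArg (‖·‖ ^ 2) hx), integral_gibbs σ hL]
  simp only [Complex.norm_real, Real.norm_eq_abs, sq_abs, smul_eq_mul, mul_comm]

lemma absLp_toLp_ofReal (hL : Measurable L) (hφ₀ : MemLp (fun x => (φ₀ x : ℂ)) 2 (gibbs σ L))
    (h_nonneg : 0 ≤ᵐ[volume] φ₀) : absLp hφ₀.toLp = hφ₀.toLp := by
  rw [EventuallyLE, ← ae_gibbs σ hL] at h_nonneg
  refine Lp.ext ?_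
  filter_upwards [coeFn_absLp hφ₀.toLp, hφ₀.coeFn_toLp, h_nonneg] with x h_abs h_coe hx
  rw [h_abs, h_coe, Complex.norm_real, Real.norm_of_nonneg hx]

end InitialDatum

section Solution

variable {d : ℕ} {σ : ℝ} {L : ℝ^d → ℝ} [Fact (ContDiff ℝ ∞ L)]

/-- The solution `e^{t𝔏} f` of the Cauchy problem for `∂ₜφ = 𝔏φ` as a smooth real-valued function;
for complex-valued `f` the real part is taken. -/
noncomputable def langevinSolution (f : Lp ℂ 2 (gibbs σ L)) (t : ℝ) (x : ℝ^d) : ℝ :=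
  (smoothRep (heatFlow (formResolvent (dirichletGraph σ L)) 0 t f) x).re

lemma contDiffOn_langevinSolution (hσ : 0 < σ) (f : Lp ℂ 2 (gibbs σ L)) :
    ContDiffOn ℝ ∞ (fun p : ℝ × ℝ^d => langevinSolution f p.1 p.2) (Set.Ioi 0 ×ˢ Set.univ) :=
  Complex.reCLM.contDiff.comp_contDiffOn (contDiffOn_smoothRep hσ (isWeakFlow_heatFlow hσ f) 0)

lemma iterate_generator_langevinSolution (hσ : 0 < σ) (f : Lp ℂ 2 (gibbs σ L)) (m : ℕ) {t : ℝ}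
    (ht : 0 < t) : (generator σ L)^[m] (langevinSolution f t) =
      fun x => (smoothRep (heatFlow (formResolvent (dirichletGraph σ L)) m t f) x).re := by
  have hy := isWeakFlow_heatFlow hσ f
  induction m with
  | zero => rfl
  | succ m ih =>
    rw [Function.iterate_succ_apply', ih, generator_eq_langevin, ← langevin_smoothRep hσ hy m ht]
    exact langevin_clm_apply Complex.reCLM (contDiff_smoothRep hσ hy m ht)

lemma hasDerivAt_langevinSolution (hσ : 0 < σ) (f : Lp ℂ 2 (gibbs σ L)) {t : ℝ} (ht : 0 < t)
    (x : ℝ^d) : HasDerivAt (fun s => langevinSolution f s x)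
      (generator σ L (langevinSolution f t) x) t := by
  have h := congrFun (iterate_generator_langevinSolution hσ f 1 ht) x
  rw [Function.iterate_one] at h
  rw [h]
  exact Complex.reCLM.hasFDerivAt.comp_hasDerivAt t
    (hasDerivAt_smoothRep hσ (isWeakFlow_heatFlow hσ f) 0 ht x)

lemma langevinSolution_nonneg (hσ : 0 < σ) {f : Lp ℂ 2 (gibbs σ L)} (hf : absLp f = f) {t : ℝ}
    (ht : 0 < t) (x : ℝ^d) : 0 ≤ langevinSolution f t x := by
  have hy := isWeakFlow_heatFlow hσ f
  have h_cont := (contDiff_smoothRep hσ hy 0 ht).continuous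
  have h_ae := coeFn_absLp (heatFlow (formResolvent (dirichletGraph σ L)) 0 t f)
  rw [absLp_heatFlow_zero ht hf] at h_ae
  have h_norm : smoothRep (heatFlow (formResolvent (dirichletGraph σ L)) 0 t f) = fun x =>
      ((‖smoothRep (heatFlow (formResolvent (dirichletGraph σ L)) 0 t f) x‖ : ℝ) : ℂ) := by
    refine (Continuous.ae_eq_iff_eq (gibbs σ L) h_cont
      (Complex.continuous_ofReal.comp h_cont.norm)).1 ?_
    filter_upwards [h_ae, smoothRep_ae_eq hσ hy 0 ht] with x h_abs h_rep
    rwa [h_rep] at h_abs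
  rw [langevinSolution, h_norm, Complex.ofReal_re]
  exact norm_nonneg _

lemma lintegral_sq_iterate_generator_le (hσ : 0 < σ) (f : Lp ℂ 2 (gibbs σ L)) (m : ℕ) {t : ℝ}
    (ht : 0 < t) : ∫⁻ x, ENNReal.ofReal
        ((generator σ L)^[m] (langevinSolution f t) x ^ 2 * Real.exp (-L x / σ)) ≤
      ENNReal.ofReal ((m / t) ^ (2 * m) * ‖f‖ ^ 2) := by
  have hL : ContDiff ℝ ∞ L := Fact.out
  have hy := isWeakFlow_heatFlow hσ f
  rw [iterate_generator_langevinSolution hσ f m ht]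
  set T := formResolvent (dirichletGraph σ L)
  have h_meas : Measurable fun x => (smoothRep (heatFlow T m t f) x).re ^ 2 :=
    ((Complex.continuous_re.comp (contDiff_smoothRep hσ hy m ht).continuous).pow 2).measurable
  have h_norm : ‖heatFlow T m t f‖ ≤ (m / t) ^ m * ‖f‖ := ContinuousLinearMap.le_of_opNorm_le _
    (norm_heatFlow_le (spectrum_formResolvent_subset (dirichletGraph σ L)) m ht) f
  rw [← lintegral_gibbs σ hL.continuous.measurable h_meas]
  calc ∫⁻ x, ENNReal.ofReal ((smoothRep (heatFlow T m t f) x).re ^ 2) ∂gibbs σ L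
      ≤ ∫⁻ x, ENNReal.ofReal (‖heatFlow T m t f x‖ ^ 2) ∂gibbs σ L := by
        refine lintegral_mono_ae ((smoothRep_ae_eq hσ hy m ht).mono fun x hx => ?_)
        rw [hx, ← sq_abs]
        gcongr
        exact Complex.abs_re_le_norm _
    _ = ENNReal.ofReal (‖heatFlow T m t f‖ ^ 2) := lintegral_ofReal_norm_sq _
    _ ≤ ENNReal.ofReal (((m / t) ^ m * ‖f‖) ^ 2) := by gcongr
    _ = ENNReal.ofReal ((m / t) ^ (2 * m) * ‖f‖ ^ 2) := by rw [mul_pow, ← pow_mul, mul_comm m]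

lemma norm_gradient_re_sq_le {u : ℝ^d → ℂ} (hu : Differentiable ℝ u) (x : ℝ^d) :
    ‖gradient (fun x => (u x).re) x‖ ^ 2 ≤ ∑ i, ‖pderiv i u x‖ ^ 2 := by
  rw [EuclideanSpace.real_norm_sq_eq]
  refine Finset.sum_le_sum fun i _ => ?_
  rw [gradient_apply, show pderiv i (fun x => (u x).re) = fun x => (pderiv i u x).re from
    pderiv_clm_apply Complex.reCLM hu i, ← sq_abs]
  gcongr
  exact Complex.abs_re_le_norm _

lemma lintegral_norm_gradient_re_sq_le (hσ : 0 < σ)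
    {k : WithLp 2 (Lp ℂ 2 (gibbs σ L) × PiLp 2 fun _ : Fin d => Lp ℂ 2 (gibbs σ L))}
    (hk : k ∈ dirichletGraph σ L) {u : ℝ^d → ℂ} (hu : ContDiff ℝ ∞ u)
    (h_fst : k.fst =ᵐ[gibbs σ L] u) :
    ∫⁻ x, ENNReal.ofReal (‖gradient (fun x => (u x).re) x‖ ^ 2) ∂gibbs σ L ≤
      ENNReal.ofReal (σ⁻¹ * ‖k.snd‖ ^ 2) := by
  have h_snd := ae_all_iff.2 (snd_ae_eq_of_mem_dirichletGraph hk hu h_fst)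
  calc ∫⁻ x, ENNReal.ofReal (‖gradient (fun x => (u x).re) x‖ ^ 2) ∂gibbs σ L
      ≤ ∫⁻ x, ENNReal.ofReal σ⁻¹ * ∑ i, ENNReal.ofReal (‖k.snd i x‖ ^ 2) ∂gibbs σ L := by
        refine lintegral_mono_ae (h_snd.mono fun x hx => ?_)
        rw [← ENNReal.ofReal_sum_of_nonneg fun i _ => by positivity,
          ← ENNReal.ofReal_mul (by positivity)]
        refine ENNReal.ofReal_le_ofReal
          ((norm_gradient_re_sq_le (hu.differentiable (by simp)) x).trans_eq ?_)
        simp only [hx, norm_mul, mul_pow, Complex.norm_real, Real.norm_eq_abs, sq_abs,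
          Real.sq_sqrt hσ.le, ← Finset.mul_sum, inv_mul_cancel_left₀ hσ.ne']
    _ = ENNReal.ofReal σ⁻¹ * ∑ i, ENNReal.ofReal (‖k.snd i‖ ^ 2) := by
        have h_meas i : AEMeasurable (fun x => ENNReal.ofReal (‖k.snd i x‖ ^ 2)) (gibbs σ L) :=
          ((Lp.aestronglyMeasurable (k.snd i)).norm.pow 2).aemeasurable.ennreal_ofReal
        rw [lintegral_const_mul' _ _ ENNReal.ofReal_ne_top,
          lintegral_finsetSum' _ fun i _ => h_meas i]
        simp only [lintegral_ofReal_norm_sq]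
    _ = ENNReal.ofReal (σ⁻¹ * ‖k.snd‖ ^ 2) := by
        rw [PiLp.norm_sq_eq_of_L2, ENNReal.ofReal_mul (by positivity),
          ENNReal.ofReal_sum_of_nonneg fun i _ => by positivity]

lemma lintegral_norm_gradient_iterate_generator_le (hσ : 0 < σ) (f : Lp ℂ 2 (gibbs σ L)) (m : ℕ)
    {t : ℝ} (ht : 0 < t) : ∫⁻ x, ENNReal.ofReal
        (‖gradient ((generator σ L)^[m] (langevinSolution f t)) x‖ ^ 2 * Real.exp (-L x / σ)) ≤
      ENNReal.ofReal (σ⁻¹ * ((2 * m + 1) / (2 * t)) ^ (2 * m + 1) * ‖f‖ ^ 2) := by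
  have hL : ContDiff ℝ ∞ L := Fact.out
  have hy := isWeakFlow_heatFlow hσ f
  have h_smooth := contDiff_smoothRep hσ hy m ht
  obtain ⟨k, hk, h_fst, h_snd⟩ := exists_mem_fst_eq_heatFlow (dirichletGraph σ L) m ht f
  rw [iterate_generator_langevinSolution hσ f m ht]
  have h_meas : Measurable fun x => ‖gradient (fun x =>
      (smoothRep (heatFlow (formResolvent (dirichletGraph σ L)) m t f) x).re) x‖ ^ 2 := by
    have h_re := Complex.reCLM.contDiff.comp h_smooth
    exact (((InnerProductSpace.toDual ℝ (ℝ^d)).symm.continuous.comp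
      (h_re.continuous_fderiv (by simp))).norm.pow 2).measurable
  rw [← lintegral_gibbs σ hL.continuous.measurable h_meas, mul_assoc]
  refine (lintegral_norm_gradient_re_sq_le hσ hk h_smooth ?_).trans (by gcongr)
  rw [h_fst]
  exact smoothRep_ae_eq hσ hy m ht

lemma integral_re_mul_eq_re_inner_testToLp {ψ : ℝ^d → ℝ}
    (hψ : (fun x => (ψ x : ℂ)) ∈ testFunctions d) (f : Lp ℂ 2 (gibbs σ L)) :
    ∫ x, (f x).re * ψ x * Real.exp (-L x / σ) =
      (inner ℂ (testToLp (gibbs σ L) ⟨_, hψ⟩) f).re := by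
  have hL : ContDiff ℝ ∞ L := Fact.out
  have h_re := integral_re (integrable_testFunction_mul (star_mem_testFunctions hψ) f)
  rw [inner_testToLp]
  refine Eq.trans ?_ h_re
  rw [integral_gibbs σ hL.continuous.measurable]
  refine integral_congr_ae (.of_forall fun x => ?_)
  simp only [Pi.star_apply, RCLike.star_def, Complex.conj_ofReal, RCLike.mul_re,
    RCLike.re_to_complex, Complex.ofReal_re, RCLike.im_to_complex, Complex.ofReal_im, zero_mul,
    sub_zero, smul_eq_mul]
  ring

lemma tendsto_integral_langevinSolution_mul (hσ : 0 < σ) (f : Lp ℂ 2 (gibbs σ L)) {ψ : ℝ^d → ℝ}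
    (hψ : ContDiff ℝ ∞ ψ) (hc : HasCompactSupport ψ) :
    Tendsto (fun t => ∫ x, langevinSolution f t x * ψ x * Real.exp (-L x / σ)) (𝓝[>] 0)
      (𝓝 (∫ x, (f x).re * ψ x * Real.exp (-L x / σ))) := by
  have hL : ContDiff ℝ ∞ L := Fact.out
  have hψ' : (fun x => (ψ x : ℂ)) ∈ testFunctions d :=
    ⟨Complex.ofRealCLM.contDiff.comp hψ, hc.comp_left (g := Complex.ofReal) Complex.ofReal_zero⟩
  have h_lim := tendsto_inner_heatFlow_zero (isSelfAdjoint_formResolvent (dirichletGraph σ L))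
    (spectrum_formResolvent_subset _) (testToLp (gibbs σ L) ⟨_, hψ'⟩ -
      testToLp (gibbs σ L) (testLangevin σ L ⟨_, hψ'⟩)) f
  rw [← testToLp_eq_formResolvent hσ] at h_lim
  replace h_lim := (Complex.continuous_re.tendsto _).comp h_lim
  rw [← integral_re_mul_eq_re_inner_testToLp hψ'] at h_lim
  refine h_lim.congr' (eventually_mem_nhdsWithin.mono fun t ht => ?_)
  have h_rep := smoothRep_ae_eq hσ (isWeakFlow_heatFlow hσ f) 0 ht
  rw [EventuallyEq, ae_gibbs σ hL.continuous.measurable] at h_rep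
  rw [Function.comp_apply, ← integral_re_mul_eq_re_inner_testToLp hψ']
  exact integral_congr_ae (h_rep.mono fun x hx => by simp only [hx, langevinSolution])

end Solution

end FokkerPlanck

theorem fokker_planck_wellposedness_general
    (d : ℕ) (L : EuclideanSpace ℝ (Fin d) → ℝ) (hL : ContDiff ℝ (⊤ : ℕ∞) L)
    (σ : ℝ) (hσ : 0 < σ)
    (φ₀ : EuclideanSpace ℝ (Fin d) → ℝ) (hφ₀_meas : AEStronglyMeasurable φ₀)
    (hφ₀_L2 : Integrable (fun w => (φ₀ w) ^ 2 * Real.exp (-L w / σ))) :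
    ∃ φ : ℝ → EuclideanSpace ℝ (Fin d) → ℝ,
      ContDiffOn ℝ (⊤ : ℕ∞) (fun p : ℝ × EuclideanSpace ℝ (Fin d) => φ p.1 p.2)
        (Set.Ioi (0 : ℝ) ×ˢ Set.univ) ∧
      (0 ≤ᵐ[volume] φ₀ → ∀ t > (0 : ℝ), ∀ w, 0 ≤ φ t w) ∧
      (∀ t > (0 : ℝ), ∀ w,
        HasDerivAt (fun s => φ s w) (generator σ L (φ t) w) t) ∧
      (∀ t > (0 : ℝ),
        ∫⁻ w, ENNReal.ofReal ((φ t w) ^ 2 * Real.exp (-L w / σ)) ≤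
          ENNReal.ofReal (∫ w, (φ₀ w) ^ 2 * Real.exp (-L w / σ))) ∧
      (∀ t > (0 : ℝ),
        ∫⁻ w, ENNReal.ofReal (‖gradient (φ t) w‖ ^ 2 * Real.exp (-L w / σ)) ≤
          ENNReal.ofReal ((1 / (2 * σ * t)) *
            ∫ w, (φ₀ w) ^ 2 * Real.exp (-L w / σ))) ∧
      (∀ m : ℕ, 1 ≤ m → ∀ t > (0 : ℝ),
        (∫⁻ w, ENNReal.ofReal
            (((generator σ L)^[m] (φ t) w) ^ 2 * Real.exp (-L w / σ)) ≤
          ENNReal.ofReal (((m : ℝ) / t) ^ (2 * m) *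
            ∫ w, (φ₀ w) ^ 2 * Real.exp (-L w / σ))) ∧
        (∫⁻ w, ENNReal.ofReal
            (‖gradient ((generator σ L)^[m] (φ t)) w‖ ^ 2 * Real.exp (-L w / σ)) ≤
          ENNReal.ofReal (σ⁻¹ * ((2 * (m : ℝ) + 1) / (2 * t)) ^ (2 * m + 1) *
            ∫ w, (φ₀ w) ^ 2 * Real.exp (-L w / σ)))) ∧
      (∀ ψ : EuclideanSpace ℝ (Fin d) → ℝ, ContDiff ℝ (⊤ : ℕ∞) ψ → HasCompactSupport ψ →
        Tendsto (fun t => ∫ w, φ t w * ψ w * Real.exp (-L w / σ))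
          (𝓝[>] (0 : ℝ))
          (𝓝 (∫ w, φ₀ w * ψ w * Real.exp (-L w / σ)))) := by
  open FokkerPlanck in
  have : Fact (ContDiff ℝ (⊤ : ℕ∞) L) := ⟨hL⟩
  have hLm := hL.continuous.measurable
  have hφ₀ := memLp_ofReal_gibbs hLm hφ₀_meas hφ₀_L2
  have h_ae := hφ₀.coeFn_toLp
  rw [EventuallyEq, ae_gibbs σ hLm] at h_ae
  rw [← norm_toLp_ofReal_gibbs hLm hφ₀]
  refine ⟨langevinSolution hφ₀.toLp, contDiffOn_langevinSolution hσ _,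
    fun h t ht w => langevinSolution_nonneg hσ (absLp_toLp_ofReal hLm hφ₀ h) ht w,
    fun t ht w => hasDerivAt_langevinSolution hσ _ ht w, fun t ht => ?_, fun t ht => ?_,
    fun m _ t ht => ⟨lintegral_sq_iterate_generator_le hσ _ m ht,
      lintegral_norm_gradient_iterate_generator_le hσ _ m ht⟩, fun ψ hψ hc => ?_⟩
  · simpa using lintegral_sq_iterate_generator_le hσ hφ₀.toLp 0 ht
  · have h := lintegral_norm_gradient_iterate_generator_le hσ hφ₀.toLp 0 ht
    rwa [show σ⁻¹ * ((2 * ((0 : ℕ) : ℝ) + 1) / (2 * t)) ^ (2 * 0 + 1) = 1 / (2 * σ * t) by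
      simp only [Nat.cast_zero, mul_zero, zero_add, pow_one]; field_simp] at h
  · rw [integral_congr_ae (h_ae.mono fun w hw => show _ = (hφ₀.toLp _ w).re * ψ w * _ by
      rw [hw, Complex.ofReal_re])]
    exact tendsto_integral_langevinSolution_mul hσ _ hψ hc

/-- Existence, smoothness and a priori estimates for the Cauchy problem
`∂ₜφ = σΔφ - ⟨∇L, ∇φ⟩` with positive initial datum `φ₀ ∈ L²(π)`, `π = e^{-L/σ}`. -/
theorem fokker_planck_wellposedness
    (d : ℕ) (L : EuclideanSpace ℝ (Fin d) → ℝ) (hL : ContDiff ℝ (⊤ : ℕ∞) L)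
    (σ : ℝ) (hσ : 0 < σ)
    (φ₀ : EuclideanSpace ℝ (Fin d) → ℝ) (hφ₀_meas : Measurable φ₀)
    (hφ₀_pos : ∀ w, 0 < φ₀ w)
    (hφ₀_L2 : Integrable (fun w => (φ₀ w) ^ 2 * Real.exp (-L w / σ))) :
    ∃ φ : ℝ → EuclideanSpace ℝ (Fin d) → ℝ,
      -- joint smoothness on (0,∞) × ℝ^d
      ContDiffOn ℝ (⊤ : ℕ∞) (fun p : ℝ × EuclideanSpace ℝ (Fin d) => φ p.1 p.2)
        (Set.Ioi (0 : ℝ) ×ˢ Set.univ) ∧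
      -- nonnegativity
      (∀ t > (0 : ℝ), ∀ w, 0 ≤ φ t w) ∧
      -- (i) the PDE ∂ₜφ = 𝔏φ
      (∀ t > (0 : ℝ), ∀ w,
        HasDerivAt (fun s => φ s w) (generator σ L (φ t) w) t) ∧
      -- (ii) L²(π) contraction
      (∀ t > (0 : ℝ),
        ∫⁻ w, ENNReal.ofReal ((φ t w) ^ 2 * Real.exp (-L w / σ)) ≤
          ENNReal.ofReal (∫ w, (φ₀ w) ^ 2 * Real.exp (-L w / σ))) ∧
      -- (iii) gradient decay
      (∀ t > (0 : ℝ),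
        ∫⁻ w, ENNReal.ofReal (‖gradient (φ t) w‖ ^ 2 * Real.exp (-L w / σ)) ≤
          ENNReal.ofReal ((1 / (2 * σ * t)) *
            ∫ w, (φ₀ w) ^ 2 * Real.exp (-L w / σ))) ∧
      -- (iv) higher order decay
      (∀ m : ℕ, 1 ≤ m → ∀ t > (0 : ℝ),
        (∫⁻ w, ENNReal.ofReal
            (((generator σ L)^[m] (φ t) w) ^ 2 * Real.exp (-L w / σ)) ≤
          ENNReal.ofReal (((m : ℝ) / t) ^ (2 * m) *
            ∫ w, (φ₀ w) ^ 2 * Real.exp (-L w / σ))) ∧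
        (∫⁻ w, ENNReal.ofReal
            (‖gradient ((generator σ L)^[m] (φ t)) w‖ ^ 2 * Real.exp (-L w / σ)) ≤
          ENNReal.ofReal (σ⁻¹ * ((2 * (m : ℝ) + 1) / (2 * t)) ^ (2 * m + 1) *
            ∫ w, (φ₀ w) ^ 2 * Real.exp (-L w / σ)))) ∧
      -- (v) attainment of the initial datum
      (∀ ψ : EuclideanSpace ℝ (Fin d) → ℝ, ContDiff ℝ (⊤ : ℕ∞) ψ → HasCompactSupport ψ →
        Tendsto (fun t => ∫ w, φ t w * ψ w * Real.exp (-L w / σ))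
          (𝓝[>] (0 : ℝ))
          (𝓝 (∫ w, φ₀ w * ψ w * Real.exp (-L w / σ)))) := by
  obtain ⟨φ, h_smooth, h_nonneg, h⟩ :=
    fokker_planck_wellposedness_general d L hL σ hσ φ₀ hφ₀_meas.aestronglyMeasurable hφ₀_L2
  exact ⟨φ, h_smooth, h_nonneg (.of_forall fun w => (hφ₀_pos w).le), h⟩
end

section
/- Let L : ℝ^d → ℝ be continuously differentiable, let L* ∈ ℝ with L(w) ≥ L* for all w, suppose the set of global minimizers W* := {w ∈ ℝ^d : L(w) = L*} is nonempty and compact, and suppose the global Polyak–Łojasiewicz inequality holds: there is ℓ₁ > 0 with ℓ₁·(L(w) − L*) ≤ ‖∇L(w)‖² for all w ∈ ℝ^d. Then for every σ > 0 the Gibbs density w ↦ e^{−L(w)/σ} is integrable with respect to Lebesgue measure on ℝ^d. -/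
open MeasureTheory

/-!
The idea is that `f = √(L - L*)` has slope at least `c = √ℓ₁ / 2` wherever it is positive, by the
Polyak–Łojasiewicz inequality and the chain rule. For `c' < c`, the penalized function
`f + c' * dist · w` is coercive, hence has a minimizer `x`; the slope of `f` at `x` is at most `c'`,
so `f x = 0`, and comparing the values at `x` and at `w` gives `c' * dist w x ≤ f w`. As `c' → c`
this becomes the quadratic growth `L w - L* ≥ ℓ₁ / 4 * dist(w, W*) ^ 2`. If `W*` is bounded, then
`L` grows at least linearly in `‖w‖`, so `exp (-L / σ)` decays faster than any power of `‖w‖`.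
-/

open Filter Topology

section Slope

variable {E : Type*} [NormedAddCommGroup E] [NormedSpace ℝ E]

lemma norm_fderiv_le_of_isLocalMin_add_dist {f : E → ℝ} {x : E} {c : ℝ} (hc : 0 ≤ c)
    (hf : DifferentiableAt ℝ f x) (hmin : IsLocalMin (fun y ↦ f y + c * dist y x) x) :
    ‖fderiv ℝ f x‖ ≤ c := by
  have neg_le (v : E) : -(c * ‖v‖) ≤ fderiv ℝ f x v := by
    have line_tendsto : Tendsto (fun t : ℝ ↦ x + t • v) (𝓝[>] 0) (𝓝 x) := by
      have : Continuous fun t : ℝ ↦ x + t • v := by fun_prop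
      simpa using (this.tendsto 0).mono_left nhdsWithin_le_nhds
    refine ge_of_tendsto (hf.hasFDerivAt.hasLineDerivAt v).tendsto_slope_zero_right ?_
    filter_upwards [line_tendsto.eventually hmin, self_mem_nhdsWithin] with t ht (t_pos : 0 < t)
    rw [dist_self, mul_zero, add_zero, dist_self_add_left, norm_smul,
      Real.norm_of_nonneg t_pos.le] at ht
    rw [smul_eq_mul, ← div_eq_inv_mul, le_div_iff₀ t_pos]
    linarith
  refine ContinuousLinearMap.opNorm_le_bound _ hc fun v ↦ abs_le.2 ⟨neg_le v, ?_⟩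
  simpa using neg_le (-v)

lemma exists_zero_mul_dist_le_of_lt_norm_fderiv [ProperSpace E] {f : E → ℝ} {c : ℝ} (hc : 0 < c)
    (hf : Continuous f) (hf_nonneg : ∀ x, 0 ≤ f x)
    (hslope : ∀ x, 0 < f x → DifferentiableAt ℝ f x ∧ c < ‖fderiv ℝ f x‖) (w : E) :
    ∃ x, f x = 0 ∧ c * dist w x ≤ f w := by
  have coercive : Tendsto (fun y ↦ f y + c * dist y w) (cocompact E) atTop :=
    tendsto_atTop_mono (fun y ↦ le_add_of_nonneg_left (hf_nonneg y))
      ((tendsto_dist_right_cocompact_atTop w).const_mul_atTop hc)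
  obtain ⟨x, hx⟩ := Continuous.exists_forall_le (by fun_prop) coercive
  have isLocalMin : IsLocalMin (fun y ↦ f y + c * dist y x) x := by
    refine Eventually.of_forall fun y ↦ ?_
    have := mul_le_mul_of_nonneg_left (dist_triangle y x w) hc.le
    simp only [dist_self, mul_zero, add_zero]
    linarith [hx y]
  refine ⟨x, ?_, ?_⟩
  · by_contra hne
    obtain ⟨hdiff, hlt⟩ := hslope x ((hf_nonneg x).lt_of_ne' hne)
    exact hlt.not_ge (norm_fderiv_le_of_isLocalMin_add_dist hc.le hdiff isLocalMin)
  · have := hx w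
    rw [dist_self, mul_zero, add_zero, dist_comm x w] at this
    linarith [hf_nonneg x]

lemma exists_zero_mul_dist_le_of_le_norm_fderiv [ProperSpace E] {f : E → ℝ} {c : ℝ} (hc : 0 < c)
    (hf : Continuous f) (hf_nonneg : ∀ x, 0 ≤ f x)
    (hslope : ∀ x, 0 < f x → DifferentiableAt ℝ f x ∧ c ≤ ‖fderiv ℝ f x‖) (w : E) :
    ∃ x, f x = 0 ∧ c * dist w x ≤ f w := by
  have exists_zero {c' : ℝ} (hc' : 0 < c') (hlt : c' < c) : ∃ x, f x = 0 ∧ c' * dist w x ≤ f w :=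
    exists_zero_mul_dist_le_of_lt_norm_fderiv hc' hf hf_nonneg
      (fun x hx ↦ (hslope x hx).imp_right hlt.trans_le) w
  have zeros_nonempty : {x | f x = 0}.Nonempty :=
    (exists_zero (half_pos hc) (half_lt_self hc)).imp fun _ ↦ And.left
  obtain ⟨x, hx, infDist_eq⟩ :=
    (isClosed_singleton.preimage hf : IsClosed {x | f x = 0}).exists_infDist_eq_dist
      zeros_nonempty w
  refine ⟨x, hx, ?_⟩
  have : ∀ᶠ c' in 𝓝[<] c, c' * dist w x ≤ f w := by
    filter_upwards [Ioo_mem_nhdsLT hc] with c' ⟨hc', hlt⟩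
    obtain ⟨x', hx', hle⟩ := exists_zero hc' hlt
    have dist_le : dist w x ≤ dist w x' := infDist_eq ▸ Metric.infDist_le_dist_of_mem hx'
    exact (mul_le_mul_of_nonneg_left dist_le hc'.le).trans hle
  exact le_of_tendsto
    (((continuous_mul_const (dist w x)).tendsto c).mono_left nhdsWithin_le_nhds) this

end Slope

section PolyakLojasiewicz

variable {E : Type*} [NormedAddCommGroup E] [NormedSpace ℝ E]

/-- The global Polyak–Łojasiewicz inequality with constant `ℓ` at the level `m`, which stands for
the minimum of `L`. The slope is measured by the operator norm of the derivative, so that `E` need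
not be an inner product space; on a Hilbert space this is the norm of the gradient. -/
def PolyakLojasiewicz (ℓ m : ℝ) (L : E → ℝ) : Prop :=
  ∀ w, ℓ * (L w - m) ≤ ‖fderiv ℝ L w‖ ^ 2

variable {ℓ m : ℝ} {L : E → ℝ}

lemma PolyakLojasiewicz.le_norm_fderiv_sqrt_sub (hPL : PolyakLojasiewicz ℓ m L) {w : E}
    (hw : m < L w) (hL : DifferentiableAt ℝ L w) :
    √ℓ / 2 ≤ ‖fderiv ℝ (fun y ↦ √(L y - m)) w‖ := by
  have hpos : 0 < L w - m := sub_pos.2 hw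
  have sqrt_le : √ℓ * √(L w - m) ≤ ‖fderiv ℝ L w‖ := by
    rw [← Real.sqrt_mul' _ hpos.le]
    exact Real.sqrt_le_iff.2 ⟨norm_nonneg _, hPL w⟩
  rw [fderiv_sqrt (hL.sub_const m) hpos.ne', fderiv_sub_const, norm_smul,
    Real.norm_of_nonneg (by positivity), one_div_mul_eq_div, le_div_iff₀ (by positivity)]
  linarith

theorem PolyakLojasiewicz.exists_quadratic_growth [ProperSpace E] (hPL : PolyakLojasiewicz ℓ m L)
    (hℓ : 0 < ℓ) (hL : Differentiable ℝ L) (hm : ∀ w, m ≤ L w) (w : E) :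
    ∃ x, L x = m ∧ ℓ / 4 * dist w x ^ 2 ≤ L w - m := by
  obtain ⟨x, hx, hle⟩ := exists_zero_mul_dist_le_of_le_norm_fderiv (f := fun y ↦ √(L y - m))
    (c := √ℓ / 2) (by positivity) (hL.continuous.sub continuous_const).sqrt
    (fun y ↦ Real.sqrt_nonneg _)
    (fun y hy ↦ have hy : 0 < L y - m := Real.sqrt_pos.1 hy
      ⟨((hL y).sub_const m).sqrt hy.ne', hPL.le_norm_fderiv_sqrt_sub (sub_pos.1 hy) (hL y)⟩) w
  refine ⟨x, (sub_nonpos.1 (Real.sqrt_eq_zero'.1 hx)).antisymm (hm x), ?_⟩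
  calc ℓ / 4 * dist w x ^ 2 = (√ℓ / 2 * dist w x) ^ 2 := by
        rw [mul_pow, div_pow, Real.sq_sqrt hℓ.le]; norm_num
    _ ≤ √(L w - m) ^ 2 := by gcongr
    _ = L w - m := Real.sq_sqrt (sub_nonneg.2 (hm w))

theorem PolyakLojasiewicz.exists_linear_growth [ProperSpace E] (hPL : PolyakLojasiewicz ℓ m L)
    (hℓ : 0 < ℓ) (hL : Differentiable ℝ L) (hm : ∀ w, m ≤ L w)
    (hbdd : Bornology.IsBounded {w | L w = m}) :
    ∃ a > 0, ∃ b, ∀ w, a * ‖w‖ - b ≤ L w := by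
  obtain ⟨R, hR⟩ := hbdd.exists_norm_le
  refine ⟨ℓ / 2, half_pos hℓ, ℓ / 2 * R + ℓ / 4 - m, fun w ↦ ?_⟩
  obtain ⟨x, hx, hgrowth⟩ := hPL.exists_quadratic_growth hℓ hL hm w
  have norm_sub_le_dist : ‖w‖ - R ≤ dist w x := by
    rw [dist_eq_norm]
    linarith [norm_sub_norm_le w x, hR x hx]
  have two_mul_sub_one_le_sq : 2 * dist w x - 1 ≤ dist w x ^ 2 := by
    linarith [two_mul_le_add_sq (dist w x) 1]
  calc ℓ / 2 * ‖w‖ - (ℓ / 2 * R + ℓ / 4 - m) = ℓ / 4 * (2 * (‖w‖ - R) - 1) + m := by ring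
    _ ≤ ℓ / 4 * (2 * dist w x - 1) + m := by gcongr
    _ ≤ ℓ / 4 * dist w x ^ 2 + m := by gcongr
    _ ≤ L w := by linarith

lemma norm_gradient_eq_norm_fderiv {F : Type*} [NormedAddCommGroup F] [InnerProductSpace ℝ F]
    [CompleteSpace F] (f : F → ℝ) (x : F) : ‖gradient f x‖ = ‖fderiv ℝ f x‖ :=
  LinearIsometryEquiv.norm_map _ _

end PolyakLojasiewicz

section Integrability

variable {E : Type*} [NormedAddCommGroup E] [MeasurableSpace E]

lemma pow_mul_exp_neg_mul_le {a r : ℝ} (ha : 0 < a) (hr : 0 ≤ r) (n : ℕ) :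
    r ^ n * Real.exp (-(a * r)) ≤ n.factorial / a ^ n := by
  have := Real.pow_div_factorial_le_exp (a * r) (by positivity) n
  rw [div_le_iff₀ (by positivity), mul_pow] at this
  rw [Real.exp_neg, ← div_eq_mul_inv, div_le_div_iff₀ (Real.exp_pos _) (by positivity)]
  linarith

lemma integrable_exp_neg_of_linear_growth [BorelSpace E] [SecondCountableTopology E]
    {μ : Measure E} [μ.HasTemperateGrowth] {V : E → ℝ} (hV : AEStronglyMeasurable V μ) {a b : ℝ}
    (ha : 0 < a) (hgrowth : ∀ w, a * ‖w‖ - b ≤ V w) :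
    Integrable (fun w ↦ Real.exp (-V w)) μ := by
  have exp_le (w : E) : Real.exp (-V w) ≤ Real.exp b * Real.exp (-(a * ‖w‖)) := by
    rw [← Real.exp_add]
    exact Real.exp_le_exp.2 (by linarith [hgrowth w])
  have norm_pow_mul_le (n : ℕ) (w : E) :
      ‖w‖ ^ n * ‖Real.exp (-V w)‖ ≤ Real.exp b * (n.factorial / a ^ n) := by
    rw [Real.norm_of_nonneg (Real.exp_pos _).le]
    calc ‖w‖ ^ n * Real.exp (-V w) ≤ ‖w‖ ^ n * (Real.exp b * Real.exp (-(a * ‖w‖))) := by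
          gcongr; exact exp_le w
      _ = Real.exp b * (‖w‖ ^ n * Real.exp (-(a * ‖w‖))) := by ring
      _ ≤ _ := by gcongr; exact pow_mul_exp_neg_mul_le ha (norm_nonneg w) n
  have hmeas : AEStronglyMeasurable (fun w ↦ Real.exp (-V w)) μ :=
    Real.continuous_exp.comp_aestronglyMeasurable hV.neg
  rw [← integrable_norm_iff hmeas]
  simpa only [pow_zero, one_mul] using integrable_of_le_of_pow_mul_le (k := 0)
    (fun w ↦ by simpa only [pow_zero, one_mul] using norm_pow_mul_le 0 w)
    (norm_pow_mul_le _) hmeas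

theorem gibbs_integrable_of_compact_minimizers_general [NormedSpace ℝ E] [FiniteDimensional ℝ E]
    [BorelSpace E] {μ : Measure E} [μ.HasTemperateGrowth] {ℓ m : ℝ} {L : E → ℝ}
    (hL : Differentiable ℝ L) (hm : ∀ w, m ≤ L w) (hbdd : Bornology.IsBounded {w | L w = m})
    (hℓ : 0 < ℓ) (hPL : PolyakLojasiewicz ℓ m L) {σ : ℝ} (hσ : 0 < σ) :
    Integrable (fun w ↦ Real.exp (-L w / σ)) μ := by
  obtain ⟨a, ha, b, hgrowth⟩ := hPL.exists_linear_growth hℓ hL hm hbdd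
  simp only [neg_div]
  refine integrable_exp_neg_of_linear_growth (hL.continuous.div_const σ).aestronglyMeasurable
    (div_pos ha hσ) (b := b / σ) fun w ↦ ?_
  calc a / σ * ‖w‖ - b / σ = (a * ‖w‖ - b) / σ := by ring
    _ ≤ L w / σ := by gcongr; exact hgrowth w

end Integrability

/-- If `L` is `C¹`, bounded below by `L*`, its set of global minimizers is nonempty and
compact, and `L` satisfies a global Polyak–Łojasiewicz inequality, then the Gibbs density
`e^{-L/σ}` is Lebesgue-integrable for every `σ > 0`. -/
theorem gibbs_integrable_of_compact_minimizers
    (d : ℕ) (L : EuclideanSpace ℝ (Fin d) → ℝ) (hL : ContDiff ℝ 1 L)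
    (Lstar : ℝ) (hlow : ∀ w, L w ≥ Lstar)
    (hW_ne : {w : EuclideanSpace ℝ (Fin d) | L w = Lstar}.Nonempty)
    (hW_cpt : IsCompact {w : EuclideanSpace ℝ (Fin d) | L w = Lstar})
    (ℓ₁ : ℝ) (hℓ₁ : 0 < ℓ₁)
    (hPL : ∀ w, ℓ₁ * (L w - Lstar) ≤ ‖gradient L w‖ ^ 2) :
    ∀ σ > (0 : ℝ), Integrable (fun w => Real.exp (-L w / σ)) := by
  simp only [norm_gradient_eq_norm_fderiv] at hPL
  exact fun σ hσ ↦ gibbs_integrable_of_compact_minimizers_general (hL.differentiable one_ne_zero)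
    hlow hW_cpt.isBounded hℓ₁ hPL hσ
end

section
/- Let L : ℝ^d → ℝ be measurable, L* ∈ ℝ, let W* ⊆ ℝ^d be an unbounded set, let H : ℝ → ℝ be continuous, and suppose L(w) − L* ≤ H(dist(w, W*)) for every w ∈ ℝ^d. Then for every σ > 0, the Gibbs density w ↦ e^{−L(w)/σ} is NOT integrable with respect to Lebesgue measure on ℝ^d. -/
open MeasureTheory

/-! If the Gibbs density were integrable, the measure `e^{-L/σ} dw` would be finite, so its mass
outside large balls would tend to `0`. But `L ≤ L* + max_{[0,1]} H` within distance `1` of `W*`, so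
every unit ball centred at a point of `W*` has Gibbs mass at least a fixed positive constant, and
`W*` contains points arbitrarily far away. -/

section PseudoMetricSpace

open Filter Metric Set
open scoped ENNReal Topology

variable {X : Type*} [PseudoMetricSpace X] [MeasurableSpace X] [OpensMeasurableSpace X]
  {μ : Measure X} {W : Set X} {r : ℝ} {c : ℝ≥0∞}

theorem tendsto_measure_compl_closedBall_atTop [IsFiniteMeasure μ] (x : X) :
    Tendsto (fun R : ℝ => μ (closedBall x R)ᶜ) atTop (𝓝 0) := by
  have hInter : ⋂ R : ℝ, (closedBall x R)ᶜ = ∅ :=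
    iInter_eq_empty_iff.2 fun y => ⟨dist y x, not_not.2 (mem_closedBall.2 le_rfl)⟩
  have hAnti : Antitone fun R : ℝ => (closedBall x R)ᶜ := fun _ _ hR =>
    compl_subset_compl.2 (closedBall_subset_closedBall hR)
  simpa only [hInter, measure_empty, Function.comp_def] using
    tendsto_measure_iInter_atTop (μ := μ)
      (fun _ => measurableSet_closedBall.compl.nullMeasurableSet) hAnti ⟨0, measure_ne_top μ _⟩

theorem isBounded_of_forall_le_measure_ball [IsFiniteMeasure μ] (hc : c ≠ 0)
    (hball : ∀ w ∈ W, c ≤ μ (ball w r)) : Bornology.IsBounded W := by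
  rcases W.eq_empty_or_nonempty with rfl | ⟨x, -⟩
  · exact Bornology.isBounded_empty
  obtain ⟨R, hR⟩ : ∃ R, μ (closedBall x R)ᶜ < c :=
    ((tendsto_measure_compl_closedBall_atTop x).eventually_lt_const hc.bot_lt).exists
  refine isBounded_closedBall.subset (t := closedBall x (R + r)) fun w hw => ?_
  by_contra hfar
  have hdist : R + r ≤ dist x w := by
    rw [mem_closedBall, not_le, dist_comm] at hfar
    exact hfar.le
  exact hR.not_ge <| (hball w hw).trans <| measure_mono
    (closedBall_disjoint_ball hdist).subset_compl_left

theorem isBounded_of_lintegral_ne_top_of_le_on_thickening {f : X → ℝ≥0∞} {ε : ℝ≥0∞}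
    (hf : ∫⁻ x, f x ∂μ ≠ ∞) (hε : ε ≠ 0) (hεf : ∀ x ∈ thickening r W, ε ≤ f x)
    (hc : c ≠ 0) (hball : ∀ w ∈ W, c ≤ μ (ball w r)) : Bornology.IsBounded W := by
  have : IsFiniteMeasure (μ.withDensity f) := isFiniteMeasure_withDensity hf
  refine isBounded_of_forall_le_measure_ball (μ := μ.withDensity f) (r := r)
    (mul_ne_zero hε hc) fun w hw => ?_
  calc ε * c ≤ ε * μ (ball w r) := by gcongr; exact hball w hw
    _ = ∫⁻ _ in ball w r, ε ∂μ := (setLIntegral_const _ _).symm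
    _ ≤ ∫⁻ x in ball w r, f x ∂μ :=
      setLIntegral_mono' measurableSet_ball fun x hx => hεf x (ball_subset_thickening hw r hx)
    _ ≤ μ.withDensity f (ball w r) := withDensity_apply_le f _

/- Stated with `HasFiniteIntegral`: for non-measurable `L`, `Integrable` could fail merely for lack
of measurability. -/
theorem gibbs_not_integrable_of_unbounded_minimizers_general
    {L : X → ℝ} {Lstar : ℝ} (hW : ¬ Bornology.IsBounded W)
    (hc : c ≠ 0) (hball : ∀ w ∈ W, c ≤ μ (ball w r))
    {H : ℝ → ℝ} (hH : BddAbove (H '' Icc 0 r))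
    (hgrowth : ∀ w, L w - Lstar ≤ H (infDist w W)) {σ : ℝ} (hσ : 0 < σ) :
    ¬ HasFiniteIntegral (fun w => Real.exp (-L w / σ)) μ := by
  intro hfin
  obtain ⟨M, hM⟩ := hH
  have hL : ∀ x ∈ thickening r W, L x ≤ M + Lstar := by
    intro x hx
    obtain ⟨w, hw, hxw⟩ := mem_thickening_iff.1 hx
    have hdist : infDist x W ≤ r := (infDist_le_dist_of_mem hw).trans hxw.le
    linarith [hgrowth x, hM (mem_image_of_mem H ⟨infDist_nonneg, hdist⟩)]
  have hgibbs : ∀ x ∈ thickening r W,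
      ‖Real.exp (-(M + Lstar) / σ)‖ₑ ≤ ‖Real.exp (-L x / σ)‖ₑ := by
    intro x hx
    simp only [Real.enorm_of_nonneg (Real.exp_nonneg _)]
    gcongr
    exact hL x hx
  exact hW <| isBounded_of_lintegral_ne_top_of_le_on_thickening hfin.ne
    (enorm_ne_zero.2 (Real.exp_ne_zero _)) hgibbs hc hball

end PseudoMetricSpace

/-- If the set `W*` is unbounded and `L - L*` is bounded above by a continuous function
of the distance to `W*`, then the Gibbs density `e^{-L/σ}` is not Lebesgue-integrable. -/
theorem gibbs_not_integrable_of_unbounded_minimizers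
    (d : ℕ) (L : EuclideanSpace ℝ (Fin d) → ℝ) (hLmeas : Measurable L)
    (Lstar : ℝ) (Wstar : Set (EuclideanSpace ℝ (Fin d)))
    (hW_unbdd : ¬ Bornology.IsBounded Wstar)
    (H : ℝ → ℝ) (hH : Continuous H)
    (hgrowth : ∀ w, L w - Lstar ≤ H (Metric.infDist w Wstar)) :
    ∀ σ > (0 : ℝ), ¬ Integrable (fun w => Real.exp (-L w / σ)) := fun _ hσ hint =>
  gibbs_not_integrable_of_unbounded_minimizers_general hW_unbdd
    (Metric.measure_ball_pos volume 0 one_pos).ne' (fun w _ => (volume.addHaar_ball_center w 1).ge)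
    (isCompact_Icc.bddAbove_image hH.continuousOn) hgrowth hσ hint.hasFiniteIntegral
end
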